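/- arXiv:2502.11162 — 3 statements merged into one kernel-verified Lean document; each statement's English description precedes it below -/
import Mathlib

section
/- Let N, d be natural numbers at least 2, let p ∈ (0, ∞], q ∈ [1, ∞], let k be a natural number with 1 ≤ k ≤ d − 1, and let σ, δ > 0 satisfy σ/δ > b_{p,q,d} · N^{−2/k}, where b_{p,q,d} = 2416 · d^{[1/2 − 1/q]_+ + [1/p − 1/2]_+} (with 1/∞ = 0). Then there exists a (δ, q)-separated dataset D of size N with 2 classes in ℝ^d such that no feedforward ReLU neural network f : ℝ^d → ℝ of width k (of any depth) (σ, p)-robustly memorizes D. -/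
open scoped ENNReal BigOperators

noncomputable section

/-- A multilayer perceptron (feedforward ReLU network) with input dimension `m`
and output dimension `n`, given as a nonempty list of affine layers. -/
inductive MLP : ℕ → ℕ → Type
  | last : {m n : ℕ} → Matrix (Fin n) (Fin m) ℝ → (Fin n → ℝ) → MLP m n
  | cons : {m h n : ℕ} → Matrix (Fin h) (Fin m) ℝ → (Fin h → ℝ) → MLP h n → MLP m n

/-- Evaluation of an MLP: every affine layer except the last is followed by a
coordinatewise ReLU. -/
def MLP.eval : {m n : ℕ} → MLP m n → (Fin m → ℝ) → Fin n → ℝ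
  | _, _, .last W b, x => W.mulVec x + b
  | _, _, .cons W b rest, x => MLP.eval rest fun i => max ((W.mulVec x + b) i) 0

/-- Depth of an MLP: the number of affine layers. -/
def MLP.depth : {m n : ℕ} → MLP m n → ℕ
  | _, _, .last _ _ => 1
  | _, _, .cons _ _ rest => MLP.depth rest + 1

/-- Width of an MLP: the maximum of the hidden-layer dimensions. -/
def MLP.width : {m n : ℕ} → MLP m n → ℕ
  | _, _, .last _ _ => 0
  | _, _, @MLP.cons _ h _ _ _ rest => max h (MLP.width rest)

/-- The `l_p` (quasi-)norm on `ℝ^d`, for `p ∈ (0,∞]`. -/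
def lpNorm (p : ℝ≥0∞) {d : ℕ} (x : Fin d → ℝ) : ℝ :=
  if p = ⊤ then ⨆ i, |x i| else (∑ i, |x i| ^ p.toReal) ^ (1 / p.toReal)

/-- The `l_p` norm on `ℝ^d` with a real exponent `p`. -/
def lpNormR (p : ℝ) {d : ℕ} (x : Fin d → ℝ) : ℝ := (∑ i, |x i| ^ p) ^ (1 / p)

/-- `1/p`, with the convention `1/∞ = 0`. -/
def rinv (p : ℝ≥0∞) : ℝ := if p = ⊤ then 0 else 1 / p.toReal

/-- `c_p^+(d) = d^{[1/2 - 1/p]_+}`. -/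
def cplus (p : ℝ≥0∞) (d : ℕ) : ℝ := (d : ℝ) ^ max ((1 : ℝ) / 2 - rinv p) 0

/-- `c_p^-(d) = d^{[1/2 - 1/p]_-}`. -/
def cminus (p : ℝ≥0∞) (d : ℕ) : ℝ := (d : ℝ) ^ min ((1 : ℝ) / 2 - rinv p) 0

/-- A dataset is `(δ, q)`-separated if the minimal `l_q` distance between
differently labeled points equals `δ`. -/
def Separated {N d : ℕ} (q : ℝ≥0∞) (δ : ℝ) (X : Fin N → Fin d → ℝ) (Y : Fin N → ℕ) : Prop :=
  (∀ i j, Y i ≠ Y j → δ ≤ lpNorm q (X i - X j)) ∧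
    ∃ i j, Y i ≠ Y j ∧ lpNorm q (X i - X j) = δ

/-- `f` `(σ, p)`-robustly memorizes the dataset `(X, Y)`. -/
def RobustMem {N d : ℕ} (p : ℝ≥0∞) (σ : ℝ) (X : Fin N → Fin d → ℝ) (Y : Fin N → ℕ)
    (f : (Fin d → ℝ) → ℝ) : Prop :=
  ∀ i, ∀ x : Fin d → ℝ, lpNorm p (x - X i) ≤ σ → f x = (Y i : ℝ)

/-- A matrix `M` `(σ, k)`-preserves a dataset: Euclidean distances between points of
`σ`-neighborhoods (in `l₂`) of differently labeled data points do not decrease. -/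
def Preserves {N d m : ℕ} (σ : ℝ) (X : Fin N → Fin d → ℝ) (Y : Fin N → ℕ)
    (M : Matrix (Fin m) (Fin d) ℝ) : Prop :=
  ∀ i j, Y i ≠ Y j → ∀ a a' : Fin d → ℝ,
    lpNorm 2 (a - X i) ≤ σ → lpNorm 2 (a' - X j) ≤ σ →
      lpNorm 2 (a - a') ≤ lpNorm 2 (M.mulVec a - M.mulVec a')

/-- The `l₂ → l₂` (spectral) operator norm of a matrix. -/
def matOpNorm {m d : ℕ} (M : Matrix (Fin m) (Fin d) ℝ) : ℝ :=
  sSup {c | ∃ x : Fin d → ℝ, lpNorm 2 x ≤ 1 ∧ c = lpNorm 2 (M.mulVec x)}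

/-- Generalized binomial coefficient `C(s, m) = s(s-1)⋯(s-m+1)/m!`. -/
def gchoose (s : ℝ) (m : ℕ) : ℝ := (∏ i ∈ Finset.range m, (s - (i : ℝ))) / (m.factorial : ℝ)

/-!
The first layer of a network of width at most `k < d` has a kernel `V` of codimension at most `k`,
and the network is invariant under `V`. If the difference `X i - X j` of two data points with
distinct labels is within `2 * σ` of a vector of `V`, then the `σ`-balls around `X i` and `X j`
contain two points differing by that vector, on which the network agrees, so it cannot be robust.

Every such `V` meets a fixed `(k + 1)`-dimensional subspace in some line, so it suffices to find a
dataset whose differences, up to scaling, approximate all directions of that subspace. The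
directions form a `k`-dimensional family, but `N` points have of the order of `N ^ 2` differences:
if one class is a net at scale `s` and the other a net at scale `s ^ 2` of a ball of radius about
`s`, then `s ^ (-k)` points reach precision `s ^ 2`, which is the rate `N ^ (-2 / k)`. The two nets
live on parallel hyperplanes, which keeps the classes apart but only covers the directions near one
unit vector; far translates of finitely many such pairs cover all of them.
-/

section Norms

variable {d : ℕ} {p q : ℝ≥0∞}

theorem rinv_eq_inv_toReal (p : ℝ≥0∞) : rinv p = p.toReal⁻¹ := by
  by_cases hp : p = ⊤ <;> simp [rinv, hp]

theorem rinv_le_rinv (hp : p ≠ 0) (hpq : p ≤ q) : rinv q ≤ rinv p := by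
  rw [rinv_eq_inv_toReal, rinv_eq_inv_toReal, ← ENNReal.toReal_inv, ← ENNReal.toReal_inv]
  exact ENNReal.toReal_mono (ENNReal.inv_ne_top.2 hp) (ENNReal.inv_le_inv.2 hpq)

theorem lpNorm_nonneg (p : ℝ≥0∞) (x : Fin d → ℝ) : 0 ≤ lpNorm p x := by
  unfold lpNorm
  split_ifs
  · exact Real.iSup_nonneg fun i ↦ abs_nonneg _
  · positivity

theorem lpNorm_two (x : Fin d → ℝ) : lpNorm 2 x = ‖WithLp.toLp 2 x‖ := by
  simp [EuclideanSpace.norm_eq, lpNorm, Real.sqrt_eq_rpow]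

theorem eLpNorm_count_eq_ofReal_lpNorm (hp : p ≠ 0) (x : Fin d → ℝ) :
    MeasureTheory.eLpNorm x p .count = ENNReal.ofReal (lpNorm p x) := by
  by_cases hp_top : p = ⊤
  · rcases isEmpty_or_nonempty (Fin d) with _ | _
    · simp [lpNorm, hp_top]
    · rw [hp_top, MeasureTheory.eLpNorm_exponent_top, MeasureTheory.eLpNormEssSup_count, lpNorm,
        if_pos rfl, ENNReal.ofReal_mono.map_ciSup_of_continuousAt
          ENNReal.continuous_ofReal.continuousAt (Set.finite_range _).bddAbove]
      simp only [Real.enorm_eq_ofReal_abs]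
  · rw [MeasureTheory.eLpNorm_eq_lintegral_rpow_enorm_toReal hp hp_top,
      MeasureTheory.lintegral_count, tsum_fintype, lpNorm, if_neg hp_top,
      ← ENNReal.ofReal_rpow_of_nonneg (by positivity) (by positivity),
      ENNReal.ofReal_sum_of_nonneg fun i _ ↦ by positivity]
    simp only [Real.enorm_eq_ofReal_abs, ENNReal.ofReal_rpow_of_nonneg (abs_nonneg _)
      ENNReal.toReal_nonneg]

theorem abs_le_lpNorm (hp : p ≠ 0) (x : Fin d → ℝ) (i : Fin d) : |x i| ≤ lpNorm p x := by
  have h := MeasureTheory.enorm_le_eLpNorm_count x i hp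
  rwa [eLpNorm_count_eq_ofReal_lpNorm hp, Real.enorm_eq_ofReal_abs,
    ENNReal.ofReal_le_ofReal_iff (lpNorm_nonneg p x)] at h

theorem lpNorm_neg (p : ℝ≥0∞) (x : Fin d → ℝ) : lpNorm p (-x) = lpNorm p x := by
  simp only [lpNorm, Pi.neg_apply, abs_neg]

theorem lpNorm_smul (hp : p ≠ 0) (c : ℝ) (x : Fin d → ℝ) :
    lpNorm p (c • x) = |c| * lpNorm p x := by
  have h := MeasureTheory.eLpNorm_const_smul c x p .count
  rwa [eLpNorm_count_eq_ofReal_lpNorm hp, eLpNorm_count_eq_ofReal_lpNorm hp,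
    Real.enorm_eq_ofReal_abs, ← ENNReal.ofReal_mul (abs_nonneg c),
    ENNReal.ofReal_eq_ofReal_iff (lpNorm_nonneg _ _)
      (mul_nonneg (abs_nonneg c) (lpNorm_nonneg _ _))] at h

theorem lpNorm_rpow_toReal (hp : p ≠ 0) (hp_top : p ≠ ⊤) (x : Fin d → ℝ) :
    lpNorm p x ^ p.toReal = ∑ i, |x i| ^ p.toReal := by
  rw [lpNorm, if_neg hp_top, one_div,
    Real.rpow_inv_rpow (by positivity) (ENNReal.toReal_pos hp hp_top).ne']

theorem lpNorm_le_lpNorm_of_exponent_ge (hp : p ≠ 0) (hpq : p ≤ q) (x : Fin d → ℝ) :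
    lpNorm q x ≤ lpNorm p x := by
  have hM := lpNorm_nonneg p x
  by_cases hq_top : q = ⊤
  · rw [lpNorm, if_pos hq_top]
    exact Real.iSup_le (abs_le_lpNorm hp x) hM
  have hp_top : p ≠ ⊤ := ne_top_of_le_ne_top hq_top hpq
  have hp_pos : 0 < p.toReal := ENNReal.toReal_pos hp hp_top
  have hpq_real : p.toReal ≤ q.toReal := ENNReal.toReal_mono hq_top hpq
  have split_exponent (a : ℝ) (ha : 0 ≤ a) :
      a ^ p.toReal * a ^ (q.toReal - p.toReal) = a ^ q.toReal := by
    rw [← Real.rpow_add_of_nonneg ha hp_pos.le (sub_nonneg.2 hpq_real), add_sub_cancel]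
  refine (Real.rpow_le_rpow_iff (lpNorm_nonneg q x) hM (hp_pos.trans_le hpq_real)).1 ?_
  calc lpNorm q x ^ q.toReal
      = ∑ i, |x i| ^ p.toReal * |x i| ^ (q.toReal - p.toReal) := by
        rw [lpNorm_rpow_toReal (ne_bot_of_le_ne_bot hp hpq) hq_top]
        exact Finset.sum_congr rfl fun i _ ↦ (split_exponent _ (abs_nonneg _)).symm
    _ ≤ ∑ i, |x i| ^ p.toReal * lpNorm p x ^ (q.toReal - p.toReal) := by
        gcongr with i
        exact abs_le_lpNorm hp x i
    _ = lpNorm p x ^ q.toReal := by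
        rw [← Finset.sum_mul, ← lpNorm_rpow_toReal hp hp_top, split_exponent _ hM]

theorem lpNorm_le_rpow_mul_lpNorm_of_exponent_le (hp : p ≠ 0) (hpq : p ≤ q) (x : Fin d → ℝ) :
    lpNorm p x ≤ (d : ℝ) ^ (rinv p - rinv q) * lpNorm q x := by
  have h := MeasureTheory.eLpNorm_le_eLpNorm_mul_rpow_measure_univ (μ := .count) hpq
    (MeasureTheory.StronglyMeasurable.of_discrete (f := x)).aestronglyMeasurable
  rw [eLpNorm_count_eq_ofReal_lpNorm hp,
    eLpNorm_count_eq_ofReal_lpNorm (ne_bot_of_le_ne_bot hp hpq)] at h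
  have hexp : 0 ≤ 1 / p.toReal - 1 / q.toReal := by
    simpa [rinv_eq_inv_toReal] using rinv_le_rinv hp hpq
  have hcount : MeasureTheory.Measure.count (Set.univ : Set (Fin d)) = ENNReal.ofReal d := by simp
  rw [hcount, ENNReal.ofReal_rpow_of_nonneg d.cast_nonneg hexp,
    ← ENNReal.ofReal_mul (lpNorm_nonneg q x), ENNReal.ofReal_le_ofReal_iff
      (mul_nonneg (lpNorm_nonneg q x) (by positivity))] at h
  rwa [rinv_eq_inv_toReal, rinv_eq_inv_toReal, ← one_div, ← one_div, mul_comm]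

theorem lpNorm_le_rpow_mul_lpNorm (hp : p ≠ 0) (hq : q ≠ 0) (x : Fin d → ℝ) :
    lpNorm p x ≤ (d : ℝ) ^ max (rinv p - rinv q) 0 * lpNorm q x := by
  rcases le_total q p with hqp | hpq
  · rw [max_eq_right (sub_nonpos.2 (rinv_le_rinv hq hqp)), Real.rpow_zero, one_mul]
    exact lpNorm_le_lpNorm_of_exponent_ge hq hqp x
  · rw [max_eq_left (sub_nonneg.2 (rinv_le_rinv hp hpq))]
    exact lpNorm_le_rpow_mul_lpNorm_of_exponent_le hp hpq x

end Norms

section Covering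

open MeasureTheory Module Metric

variable {E : Type*} [NormedAddCommGroup E] [NormedSpace ℝ E] [FiniteDimensional ℝ E]
  {x : E} {R r : ℝ}

theorem card_le_of_pairwise_le_dist {t : Finset E} (hR : 0 ≤ R) (hr : 0 < r)
    (ht : ↑t ⊆ closedBall x R) (hsep : (t : Set E).Pairwise fun a b ↦ r ≤ dist a b) :
    (t.card : ℝ) ≤ (1 + 2 * R / r) ^ finrank ℝ E := by
  borelize E
  let μ : Measure E := Measure.addHaar
  have hdisj : (t : Set E).PairwiseDisjoint fun c ↦ ball c (r / 2) := fun a ha b hb hab ↦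
    ball_disjoint_ball (by linarith [hsep ha hb hab])
  have hsub : ⋃ c ∈ t, ball c (r / 2) ⊆ ball x (R + r / 2) :=
    Set.iUnion₂_subset fun c hc ↦ ball_subset_ball' (by linarith [mem_closedBall.1 (ht hc)])
  have hball (y : E) {ρ : ℝ} (hρ : 0 < ρ) :
      μ.real (ball y ρ) = ρ ^ finrank ℝ E * μ.real (ball 0 1) := by
    simp [measureReal_def, μ.addHaar_ball_of_pos y hρ, ENNReal.toReal_ofReal (pow_nonneg hρ.le _)]
  have hvol : t.card * (r / 2) ^ finrank ℝ E ≤ (R + r / 2) ^ finrank ℝ E := by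
    refine le_of_mul_le_mul_right ?_
      (ENNReal.toReal_pos (measure_ball_pos μ (0 : E) one_pos).ne' measure_ball_lt_top.ne)
    calc t.card * (r / 2) ^ finrank ℝ E * μ.real (ball 0 1)
        = μ.real (⋃ c ∈ t, ball c (r / 2)) := by
          rw [measureReal_biUnion_finset hdisj fun _ _ ↦ measurableSet_ball]
          simp only [hball _ (half_pos hr), Finset.sum_const, nsmul_eq_mul, mul_assoc]
      _ ≤ μ.real (ball x (R + r / 2)) := measureReal_mono hsub measure_ball_lt_top.ne
      _ = (R + r / 2) ^ finrank ℝ E * μ.real (ball 0 1) := hball x (by positivity)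
  rwa [show 1 + 2 * R / r = (R + r / 2) / (r / 2) by field_simp; ring, div_pow,
    le_div_iff₀ (by positivity)]

theorem exists_finset_net {s : Set E} (hR : 0 ≤ R) (hr : 0 < r) (hs : s ⊆ closedBall x R) :
    ∃ t : Finset E, ↑t ⊆ s ∧ (t.card : ℝ) ≤ (1 + 2 * R / r) ^ finrank ℝ E ∧
      ∀ y ∈ s, ∃ c ∈ t, dist y c ≤ r := by
  have := FiniteDimensional.proper ℝ E
  lift r to NNReal using hr.le
  have hpacking : packingNumber r s ≠ ⊤ := by
    obtain ⟨N, -, hN_fin, hN⟩ := exists_finite_isCover_of_totallyBounded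
      (half_pos (NNReal.coe_pos.1 hr)).ne' ((isCompact_closedBall x R).totallyBounded.subset hs)
    have h := packingNumber_two_mul_le_externalCoveringNumber (r / 2) s
    rw [mul_div_cancel₀ r two_ne_zero] at h
    exact ne_top_of_le_ne_top hN_fin.encard_lt_top.ne
      (h.trans hN.externalCoveringNumber_le_encard)
  obtain ⟨t, ht⟩ : ∃ t : Finset E, (t : Set E) = maximalSeparatedSet r s :=
    (Set.encard_ne_top_iff.1 (encard_maximalSeparatedSet hpacking ▸ hpacking)).exists_finset_coe
  have hts : ↑t ⊆ s := ht ▸ maximalSeparatedSet_subset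
  have hsep : IsSeparated r (t : Set E) := ht ▸ isSeparated_maximalSeparatedSet
  refine ⟨t, hts, card_le_of_pairwise_le_dist hR hr (hts.trans hs) fun a ha b hb hab ↦ ?_, ?_⟩
  · have hab : (r : ENNReal) < edist a b := hsep ha hb hab
    rw [edist_nndist, ENNReal.coe_lt_coe] at hab
    exact_mod_cast hab.le
  · intro y hy
    obtain ⟨c, hc, hyc⟩ := isCover_maximalSeparatedSet hpacking hy
    exact ⟨c, by simpa [← ht] using hc, by simpa [edist_dist] using hyc⟩

-- One net of mesh `s ^ 2` would need about `s ^ (-2 k)` points. The error of a coarse net of mesh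
-- about `s` lies in a ball of that radius, so a fine net of this small ball corrects it, and each
-- of the two nets has only about `s ^ (-k)` points.
theorem exists_finset_two_scale_net {s : ℝ} (hs : 0 < s) (hs1 : s ≤ 1) :
    ∃ A B : Finset E, A.card ≤ (11 / (3 * s)) ^ finrank ℝ E ∧
      B.card ≤ (11 / (3 * s)) ^ finrank ℝ E ∧
      (∀ a ∈ A, ‖a‖ ≤ 7 / 4) ∧ (∀ b ∈ B, ‖b‖ ≤ 4 / 3) ∧
      ∀ w : E, ‖w‖ ≤ 7 / 4 → ∃ a ∈ A, ∃ b ∈ B, ‖a - b - w‖ ≤ s ^ 2 := by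
  obtain ⟨A, hA, hA_card, hA_net⟩ := exists_finset_net (E := E) (x := 0) (R := 7 / 4)
    (r := 4 / 3 * s) (by norm_num) (by positivity) subset_rfl
  obtain ⟨B, hB, hB_card, hB_net⟩ := exists_finset_net (E := E) (x := 0) (R := 4 / 3 * s)
    (r := s ^ 2) (by positivity) (by positivity) subset_rfl
  have hbase_A : 1 + 2 * (7 / 4) / (4 / 3 * s) ≤ 11 / (3 * s) := by
    field_simp
    linarith
  have hbase_B : 1 + 2 * (4 / 3 * s) / s ^ 2 ≤ 11 / (3 * s) := by
    field_simp
    linarith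
  refine ⟨A, B, hA_card.trans (by gcongr), hB_card.trans (by gcongr),
    fun a ha ↦ mem_closedBall_zero_iff.1 (hA ha),
    fun b hb ↦ (mem_closedBall_zero_iff.1 (hB hb)).trans (by linarith), fun w hw ↦ ?_⟩
  obtain ⟨a, ha, haw⟩ := hA_net w (mem_closedBall_zero_iff.2 hw)
  obtain ⟨b, hb, hb_near⟩ := hB_net (a - w)
    (mem_closedBall_zero_iff.2 (by rwa [← dist_eq_norm, dist_comm]))
  exact ⟨a, ha, b, hb, by rwa [sub_right_comm, ← dist_eq_norm]⟩

end Covering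

/-- The sets `P` and `Q` come within distance `ε` of each other modulo the subspace `V`, that is,
some points of their images in the quotient by `V` do. A map invariant under `V` cannot keep the
`ε / 2`-neighbourhoods of `P` and of `Q` apart. The difference is approximated by a vector of `V`
explicitly, so that no quotient norm is needed. -/
def NearModulo {E : Type*} [NormedAddCommGroup E] [NormedSpace ℝ E] (V : Submodule ℝ E) (ε : ℝ)
    (P Q : Finset E) : Prop :=
  ∃ a ∈ P, ∃ b ∈ Q, ∃ w ∈ V, ‖a - b - w‖ ≤ ε

section Translates

variable {E : Type*} [NormedAddCommGroup E] [NormedSpace ℝ E]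

theorem exists_pairwise_le_dist [Nontrivial E] {D : ℝ} (hD : 0 ≤ D) (ι : Type*) [Finite ι] :
    ∃ c : ι → E, Pairwise fun i j ↦ D ≤ dist (c i) (c j) := by
  obtain ⟨m, ⟨index⟩⟩ := Finite.exists_equiv_fin ι
  obtain ⟨e, he⟩ := exists_norm_eq E hD
  refine ⟨fun i ↦ ((index i : ℕ) : ℝ) • e, fun i j hij ↦ ?_⟩
  have hindex : (1 : ℝ) ≤ |((index i : ℕ) : ℝ) - (index j : ℕ)| := by
    have : ((index i : ℕ) : ℤ) - (index j : ℕ) ≠ 0 := by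
      simpa [sub_eq_zero, Fin.val_inj] using hij
    exact_mod_cast Int.one_le_abs this
  simp only [dist_eq_norm, ← sub_smul, norm_smul, he, Real.norm_eq_abs]
  exact le_mul_of_one_le_left hD hindex

theorem exists_separated_of_family [Nontrivial E] {ι : Type*} [Fintype ι] {R : ℝ} (hR : 0 ≤ R)
    (P Q : ι → Finset E) (hP : ∀ i, ∀ a ∈ P i, ‖a‖ ≤ R) (hQ : ∀ i, ∀ b ∈ Q i, ‖b‖ ≤ R)
    (hsep : ∀ i, ∀ a ∈ P i, ∀ b ∈ Q i, 1 ≤ dist a b) :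
    ∃ P' Q' : Finset E, P'.card ≤ ∑ i, (P i).card ∧ Q'.card ≤ ∑ i, (Q i).card ∧
      (∀ a ∈ P', ∀ b ∈ Q', 1 ≤ dist a b) ∧
      ∀ i V ε, NearModulo V ε (P i) (Q i) → NearModulo V ε P' Q' := by
  classical
  obtain ⟨c, hc⟩ := exists_pairwise_le_dist (E := E) (by positivity : 0 ≤ 2 * R + 1) ι
  refine ⟨Finset.univ.biUnion fun i ↦ (P i).image (c i + ·),
    Finset.univ.biUnion fun i ↦ (Q i).image (c i + ·),
    Finset.card_biUnion_le.trans (Finset.sum_le_sum fun _ _ ↦ Finset.card_image_le),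
    Finset.card_biUnion_le.trans (Finset.sum_le_sum fun _ _ ↦ Finset.card_image_le), ?_, ?_⟩
  · simp only [Finset.mem_biUnion, Finset.mem_univ, true_and, Finset.mem_image]
    rintro _ ⟨i, a, ha, rfl⟩ _ ⟨j, b, hb, rfl⟩
    rcases eq_or_ne i j with rfl | hij
    · simpa using hsep i a ha b hb
    · have htriangle := dist_triangle4 (c i) (c i + a) (c j + b) (c j)
      rw [dist_self_add_right, dist_self_add_left] at htriangle
      linarith [hc hij, hP i a ha, hQ j b hb]
  · rintro i V ε ⟨a, ha, b, hb, w, hw, h⟩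
    refine ⟨c i + a, ?_, c i + b, ?_, w, hw, by rwa [add_sub_add_left_eq_sub]⟩ <;>
      exact Finset.mem_biUnion.2 ⟨i, Finset.mem_univ i, Finset.mem_image_of_mem _ ‹_›⟩

end Translates

section Directions

open Module Metric

variable {F : Type*} [NormedAddCommGroup F] [InnerProductSpace ℝ F]

theorem exists_smul_eq_add_orthogonal {u v : F} (hu : ‖u‖ = 1) (hv : ‖v‖ = 1)
    (huv : dist v u ≤ 1) :
    ∃ c : ℝ, ∃ w ∈ (ℝ ∙ u)ᗮ, c • v = u + w ∧ ‖w‖ ≤ 7 / 4 := by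
  have hinner : 1 / 2 ≤ inner ℝ u v := by
    have h := norm_sub_sq_real v u
    rw [← dist_eq_norm, hu, hv, real_inner_comm] at h
    nlinarith [dist_nonneg (x := v) (y := u)]
  have hc : inner ℝ u v ≠ 0 := by positivity
  have horth : inner ℝ u ((inner ℝ u v)⁻¹ • v - u) = 0 := by
    rw [inner_sub_right, inner_smul_right, inv_mul_cancel₀ hc, real_inner_self_eq_norm_sq, hu]
    norm_num
  refine ⟨(inner ℝ u v)⁻¹, (inner ℝ u v)⁻¹ • v - u,
    Submodule.mem_orthogonal_singleton_iff_inner_right.2 horth, by abel, ?_⟩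
  have hpyth := norm_add_sq_eq_norm_sq_add_norm_sq_real horth
  rw [add_sub_cancel, norm_smul, hu, hv, Real.norm_eq_abs, abs_inv, abs_of_pos (by positivity)]
    at hpyth
  have hinv : (inner ℝ u v)⁻¹ ≤ 2 := (inv_anti₀ (by norm_num) hinner).trans (by norm_num)
  have hinv' : 0 ≤ (inner ℝ u v)⁻¹ := by positivity
  nlinarith [norm_nonneg ((inner ℝ u v)⁻¹ • v - u)]

variable [FiniteDimensional ℝ F] {k : ℕ} {s : ℝ}

theorem exists_separated_nearModulo_line_of_dist_le (hF : finrank ℝ F = k + 1) (hs : 0 < s)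
    (hs1 : s ≤ 1) {u : F} (hu : ‖u‖ = 1) :
    ∃ P Q : Finset F, P.card ≤ (11 / (3 * s)) ^ k ∧ Q.card ≤ (11 / (3 * s)) ^ k ∧
      (∀ a ∈ P, ‖a‖ ≤ 3) ∧ (∀ b ∈ Q, ‖b‖ ≤ 3) ∧ (∀ a ∈ P, ∀ b ∈ Q, 1 ≤ dist a b) ∧
      ∀ v, ‖v‖ = 1 → dist v u ≤ 1 → NearModulo (ℝ ∙ v) (s ^ 2) P Q := by
  classical
  have := Fact.mk hF
  have hu0 : u ≠ 0 := norm_ne_zero_iff.1 (by rw [hu]; exact one_ne_zero)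
  obtain ⟨A, B, hA_card, hB_card, hA, hB, hnet⟩ :=
    exists_finset_two_scale_net (E := (ℝ ∙ u)ᗮ) hs hs1
  rw [Submodule.finrank_orthogonal_span_singleton (n := k) hu0] at hA_card hB_card
  -- `P` and `Q` lie on the parallel hyperplanes `⟪u, x⟫ = 1` and `⟪u, x⟫ = 0`.
  refine ⟨A.image fun a : (ℝ ∙ u)ᗮ ↦ u + (a : F), B.image fun b : (ℝ ∙ u)ᗮ ↦ (b : F),
    (Nat.cast_le.2 Finset.card_image_le).trans hA_card,
    (Nat.cast_le.2 Finset.card_image_le).trans hB_card,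
    Finset.forall_mem_image.2 fun a ha ↦ (norm_add_le _ _).trans ?_,
    Finset.forall_mem_image.2 fun b hb ↦ (hB b hb).trans (by norm_num),
    Finset.forall_mem_image.2 fun a _ ↦ Finset.forall_mem_image.2 fun b _ ↦ ?_,
    fun v hv hvu ↦ ?_⟩
  · linarith [hA a ha, Submodule.coe_norm a]
  · have horth : inner ℝ u ((a - b : (ℝ ∙ u)ᗮ) : F) = 0 :=
      Submodule.mem_orthogonal_singleton_iff_inner_right.1 (a - b).2
    have hpyth := norm_add_sq_eq_norm_sq_add_norm_sq_real horth
    rw [dist_eq_norm, add_sub_assoc, ← Submodule.coe_sub]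
    nlinarith [norm_nonneg (u + ((a - b : (ℝ ∙ u)ᗮ) : F)),
      norm_nonneg ((a - b : (ℝ ∙ u)ᗮ) : F)]
  · obtain ⟨c, w, hw, hcv, hw_norm⟩ := exists_smul_eq_add_orthogonal hu hv hvu
    lift w to (ℝ ∙ u)ᗮ using hw
    obtain ⟨a, ha, b, hb, hab⟩ := hnet w hw_norm
    refine ⟨u + a, Finset.mem_image_of_mem _ ha, b, Finset.mem_image_of_mem _ hb, c • v,
      Submodule.smul_mem _ c (Submodule.mem_span_singleton_self v), ?_⟩
    rwa [hcv, add_sub_assoc, add_sub_add_left_eq_sub]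

theorem exists_separated_nearModulo_line (hF : finrank ℝ F = k + 1) (hs : 0 < s) (hs1 : s ≤ 1) :
    ∃ P Q : Finset F, (P.card + Q.card : ℝ) ≤ 6 * (11 / s) ^ k ∧
      (∀ a ∈ P, ∀ b ∈ Q, 1 ≤ dist a b) ∧ ∀ v ≠ 0, NearModulo (ℝ ∙ v) (s ^ 2) P Q := by
  have : Nontrivial F := nontrivial_of_finrank_pos (R := ℝ) (hF ▸ k.succ_pos)
  obtain ⟨T, hT, hT_card, hT_net⟩ := exists_finset_net (E := F) (s := sphere 0 1)
    zero_le_one one_pos sphere_subset_closedBall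
  choose P Q hP_card hQ_card hP hQ hsep hnear using fun u : T ↦
    exists_separated_nearModulo_line_of_dist_le hF hs hs1 (mem_sphere_zero_iff_norm.1 (hT u.2))
  obtain ⟨P', Q', hP'_card, hQ'_card, hsep', hnear'⟩ := exists_separated_of_family
    (by norm_num) P Q hP hQ hsep
  refine ⟨P', Q', ?_, hsep', fun v hv ↦ ?_⟩
  · have hsum (n : T → ℕ) (hn : ∀ u, (n u : ℝ) ≤ (11 / (3 * s)) ^ k) :
        ((∑ u, n u : ℕ) : ℝ) ≤ T.card * (11 / (3 * s)) ^ k := by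
      rw [Nat.cast_sum, ← nsmul_eq_mul, ← Fintype.card_coe]
      exact Finset.sum_le_card_nsmul _ _ _ fun u _ ↦ hn u
    calc (P'.card + Q'.card : ℝ)
        ≤ T.card * (11 / (3 * s)) ^ k + T.card * (11 / (3 * s)) ^ k :=
          add_le_add ((Nat.cast_le.2 hP'_card).trans (hsum _ hP_card))
            ((Nat.cast_le.2 hQ'_card).trans (hsum _ hQ_card))
      _ ≤ 3 ^ (k + 1) * (11 / (3 * s)) ^ k + 3 ^ (k + 1) * (11 / (3 * s)) ^ k := by
          rw [hF, show (1 : ℝ) + 2 * 1 / 1 = 3 by norm_num] at hT_card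
          gcongr
      _ = 6 * (3 * (11 / (3 * s))) ^ k := by rw [mul_pow, pow_succ]; ring
      _ = 6 * (11 / s) ^ k := by field_simp
  · have hunit : ‖(‖v‖⁻¹ : ℝ) • v‖ = 1 := norm_smul_inv_norm hv
    obtain ⟨u, hu, hvu⟩ := hT_net _ (mem_sphere_zero_iff_norm.2 hunit)
    rw [← Submodule.span_singleton_smul_eq (inv_ne_zero (norm_ne_zero_iff.2 hv)).isUnit v]
    exact hnear' ⟨u, hu⟩ _ _ (hnear ⟨u, hu⟩ _ hunit hvu)

theorem exists_separated_nearModulo {E : Type*} [NormedAddCommGroup E] [InnerProductSpace ℝ E]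
    [FiniteDimensional ℝ E] (hk : k < finrank ℝ E) (hs : 0 < s) (hs1 : s ≤ 1) :
    ∃ P Q : Finset E, (P.card + Q.card : ℝ) ≤ 6 * (11 / s) ^ k ∧
      (∀ a ∈ P, ∀ b ∈ Q, 1 ≤ dist a b) ∧
      ∀ V : Submodule ℝ E, finrank ℝ E ≤ finrank ℝ V + k → NearModulo V (s ^ 2) P Q := by
  obtain ⟨f, hf⟩ := exists_linearIndependent_of_le_finrank (R := ℝ) (M := E) hk
  let F := Submodule.span ℝ (Set.range f)
  have hF : finrank ℝ F = k + 1 := by rw [finrank_span_eq_card hf, Fintype.card_fin]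
  obtain ⟨P, Q, hcard, hsep, hnear⟩ := exists_separated_nearModulo_line hF hs hs1
  refine ⟨P.map (Function.Embedding.subtype _), Q.map (Function.Embedding.subtype _),
    by simpa only [Finset.card_map] using hcard, ?_, fun V hV ↦ ?_⟩
  · exact Finset.forall_mem_map.2 fun a ha ↦ Finset.forall_mem_map.2 (hsep a ha)
  · have hdisj : ¬ Disjoint V F := fun h ↦ by
      have := Submodule.finrank_add_finrank_le_of_disjoint h
      omega
    obtain ⟨v, hv, hv0⟩ := Submodule.exists_mem_ne_zero_of_ne_bot (mt disjoint_iff.2 hdisj)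
    obtain ⟨a, ha, b, hb, w, hw, h⟩ := hnear ⟨v, hv.2⟩ (by simpa using hv0)
    refine ⟨a, Finset.mem_map_of_mem _ ha, b, Finset.mem_map_of_mem _ hb, w, ?_, h⟩
    obtain ⟨t, rfl⟩ := Submodule.mem_span_singleton.1 hw
    exact V.smul_mem t hv.1

theorem exists_separated_nearModulo_of_card_le {E : Type*} [NormedAddCommGroup E]
    [InnerProductSpace ℝ E] [FiniteDimensional ℝ E] {N : ℕ} (hN : 2 ≤ N) (hk : 1 ≤ k)
    (hkE : k < finrank ℝ E) :
    ∃ P Q : Finset E, P.card + Q.card ≤ N ∧ (∀ a ∈ P, ∀ b ∈ Q, 1 ≤ dist a b) ∧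
      ∀ V : Submodule ℝ E, finrank ℝ E ≤ finrank ℝ V + k →
        NearModulo V (4356 * (N : ℝ) ^ (-(2 : ℝ) / k)) P Q := by
  have hN0 : (0 : ℝ) < N := by positivity
  set s : ℝ := 66 * (N : ℝ) ^ (-(1 : ℝ) / k) with hs
  have hs0 : 0 < s := by positivity
  have hs_sq : s ^ 2 = 4356 * (N : ℝ) ^ (-(2 : ℝ) / k) := by
    rw [hs, mul_pow, ← Real.rpow_mul_natCast hN0.le,
      show -(1 : ℝ) / k * (2 : ℕ) = -(2 : ℝ) / k by push_cast; ring]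
    norm_num
  rw [← hs_sq]
  rcases le_total s 1 with hs1 | hs1
  · obtain ⟨P, Q, hcard, hsep, hnear⟩ := exists_separated_nearModulo hkE hs0 hs1
    refine ⟨P, Q, ?_, hsep, hnear⟩
    have hcount : (P.card + Q.card : ℝ) ≤ N :=
      calc (P.card + Q.card : ℝ) ≤ 6 * (11 / s) ^ k := hcard
        _ ≤ 6 ^ k * (11 / s) ^ k := by gcongr; exact le_self_pow₀ (by norm_num) (by omega)
        _ = ((N : ℝ) ^ ((1 : ℝ) / k)) ^ k := by
          rw [← mul_pow, hs, neg_div, Real.rpow_neg hN0.le]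
          congr 1
          field_simp
          norm_num
        _ = N := by rw [one_div, Real.rpow_inv_natCast_pow hN0.le (by omega)]
    exact_mod_cast hcount
  · have : Nontrivial E := nontrivial_of_finrank_pos (R := ℝ) (by omega)
    obtain ⟨e, he⟩ := exists_norm_eq E zero_le_one
    refine ⟨{e}, {0}, by simpa using hN, by simp [he], fun V _ ↦
      ⟨e, by simp, 0, by simp, 0, V.zero_mem, ?_⟩⟩
    simpa only [sub_zero, he] using one_le_pow₀ hs1

end Directions

section Datasets

open Module

theorem exists_dataset_of_card_le {E : Type*} {P Q : Finset E} (hP : P.Nonempty) {N : ℕ}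
    (hcard : P.card + Q.card ≤ N) :
    ∃ (X : Fin N → E) (Y : Fin N → ℕ), (∀ i, Y i = 1 ∧ X i ∈ P ∨ Y i = 2 ∧ X i ∈ Q) ∧
      (∀ a ∈ P, ∃ i, Y i = 1 ∧ X i = a) ∧ ∀ b ∈ Q, ∃ i, Y i = 2 ∧ X i = b := by
  obtain ⟨index⟩ : Nonempty (P ⊕ Q ↪ Fin N) :=
    Function.Embedding.nonempty_of_card_le (by simpa using hcard)
  have := hP.to_subtype
  let point : Fin N → P ⊕ Q := Function.invFun index
  have hpoint (z : P ⊕ Q) : point (index z) = z := Function.leftInverse_invFun index.injective z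
  refine ⟨fun i ↦ (point i).elim (↑) (↑), fun i ↦ (point i).elim (fun _ ↦ 1) fun _ ↦ 2,
    fun i ↦ ?_, fun a ha ↦ ⟨index (.inl ⟨a, ha⟩), by simp [hpoint]⟩,
    fun b hb ↦ ⟨index (.inr ⟨b, hb⟩), by simp [hpoint]⟩⟩
  rcases hi : point i <;> simp [hi]

theorem exists_dataset_nearModulo {N d k : ℕ} (hN : 2 ≤ N) (hk : 1 ≤ k) (hkd : k < d) :
    ∃ (X : Fin N → Fin d → ℝ) (Y : Fin N → ℕ), (∀ i, 1 ≤ Y i ∧ Y i ≤ 2) ∧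
      (∃ i j, Y i ≠ Y j) ∧ (∀ i j, Y i ≠ Y j → 1 ≤ lpNorm 2 (X i - X j)) ∧
      ∀ V : Submodule ℝ (Fin d → ℝ), d ≤ finrank ℝ V + k → ∃ i j, Y i ≠ Y j ∧ ∃ w ∈ V,
        lpNorm 2 (X i - X j - w) ≤ 4356 * (N : ℝ) ^ (-(2 : ℝ) / k) := by
  let e := (WithLp.linearEquiv 2 ℝ (Fin d → ℝ)).symm
  obtain ⟨P, Q, hcard, hsep, hnear⟩ := exists_separated_nearModulo_of_card_le
    (E := EuclideanSpace ℝ (Fin d)) hN hk (by simpa using hkd)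
  simp only [finrank_euclideanSpace_fin] at hnear
  obtain ⟨a₀, ha₀, b₀, hb₀, -⟩ := hnear ⊤ (by simp)
  obtain ⟨X, Y, hXY, hX_P, hX_Q⟩ := exists_dataset_of_card_le ⟨a₀, ha₀⟩ hcard
  obtain ⟨i₀, hi₀, -⟩ := hX_P a₀ ha₀
  obtain ⟨j₀, hj₀, -⟩ := hX_Q b₀ hb₀
  refine ⟨fun i ↦ e.symm (X i), Y, fun i ↦ by rcases hXY i with h | h <;> omega,
    ⟨i₀, j₀, by omega⟩, fun i j hij ↦ ?_, fun V hV ↦ ?_⟩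
  · rw [lpNorm_two]
    change 1 ≤ ‖X i - X j‖
    rw [← dist_eq_norm]
    rcases hXY i, hXY j with ⟨hi | hi, hj | hj⟩
    · omega
    · exact hsep _ hi.2 _ hj.2
    · exact dist_comm (X i) (X j) ▸ hsep _ hj.2 _ hi.2
    · omega
  · obtain ⟨a, ha, b, hb, _, ⟨w, hw, rfl⟩, h⟩ :=
      hnear (V.map e.toLinearMap) (by rwa [LinearEquiv.finrank_map_eq])
    obtain ⟨i, hi, rfl⟩ := hX_P a ha
    obtain ⟨j, hj, rfl⟩ := hX_Q b hb
    exact ⟨i, j, by omega, w, hw, by rw [lpNorm_two]; exact h⟩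

theorem exists_smul_separated {N d : ℕ} {q : ℝ≥0∞} (hq : q ≠ 0) {δ : ℝ} (hδ : 0 < δ)
    {X : Fin N → Fin d → ℝ} {Y : Fin N → ℕ} (hY : ∃ i j, Y i ≠ Y j)
    (hX : ∀ i j, Y i ≠ Y j → 1 ≤ lpNorm 2 (X i - X j)) :
    ∃ c > 0, c ≤ δ * (d : ℝ) ^ max ((1 : ℝ) / 2 - rinv q) 0 ∧ Separated q δ (c • X) Y := by
  obtain ⟨⟨i₀, j₀⟩, hij₀, hmin⟩ := Set.exists_min_image {ij : Fin N × Fin N | Y ij.1 ≠ Y ij.2}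
    (fun ij ↦ lpNorm q (X ij.1 - X ij.2)) (Set.toFinite _) (by simpa [Set.Nonempty] using hY)
  set m := lpNorm q (X i₀ - X j₀)
  have hm : 1 ≤ (d : ℝ) ^ max ((1 : ℝ) / 2 - rinv q) 0 * m := by
    refine (hX i₀ j₀ hij₀).trans ?_
    simpa [rinv] using lpNorm_le_rpow_mul_lpNorm two_ne_zero hq (X i₀ - X j₀)
  have hm_pos : 0 < m := pos_of_mul_pos_right (one_pos.trans_le hm) (by positivity)
  have hnorm (i j : Fin N) :
      lpNorm q ((δ / m) • X i - (δ / m) • X j) = δ / m * lpNorm q (X i - X j) := by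
    rw [← smul_sub, lpNorm_smul hq, abs_of_pos (by positivity)]
  refine ⟨δ / m, by positivity, ?_, fun i j hij ↦ ?_, i₀, j₀, hij₀, ?_⟩
  · rw [div_le_iff₀ hm_pos, mul_assoc]
    exact le_mul_of_one_le_right hδ.le hm
  · calc δ = δ / m * m := (div_mul_cancel₀ δ hm_pos.ne').symm
      _ ≤ δ / m * lpNorm q (X i - X j) := by gcongr; exact hmin (i, j) hij
      _ = lpNorm q (((δ / m) • X) i - ((δ / m) • X) j) := (hnorm i j).symm
  · exact (hnorm i₀ j₀).trans (div_mul_cancel₀ δ hm_pos.ne')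

end Datasets

section Networks

open Module

theorem MLP.exists_invariant_submodule {m n : ℕ} (net : MLP m n) :
    ∃ V : Submodule ℝ (Fin m → ℝ), m ≤ finrank ℝ V + max n net.width ∧
      ∀ x, ∀ w ∈ V, net.eval (x + w) = net.eval x := by
  have finrank_ker {h : ℕ} (W : Matrix (Fin h) (Fin m) ℝ) :
      m ≤ finrank ℝ W.mulVecLin.ker + h := by
    have hrank := W.mulVecLin.finrank_range_add_finrank_ker
    have hrange := W.mulVecLin.range.finrank_le
    rw [finrank_fin_fun] at hrank hrange
    omega
  have mulVec_add {h : ℕ} (W : Matrix (Fin h) (Fin m) ℝ) (x w : Fin m → ℝ)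
      (hw : w ∈ W.mulVecLin.ker) : W.mulVec (x + w) = W.mulVec x := by
    rw [Matrix.mulVec_add, show W.mulVec w = 0 from hw, add_zero]
  cases net with
  | last W b =>
    refine ⟨W.mulVecLin.ker, (finrank_ker W).trans (by gcongr; exact le_max_left _ _), ?_⟩
    intro x w hw
    simp only [MLP.eval, mulVec_add W x w hw]
  | cons W b rest =>
    refine ⟨W.mulVecLin.ker, (finrank_ker W).trans
      (by gcongr; exact (le_max_left _ _).trans (le_max_right _ _)), ?_⟩
    intro x w hw
    simp only [MLP.eval, mulVec_add W x w hw]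

theorem not_robustMem_of_invariant {N d : ℕ} {p : ℝ≥0∞} (hp : p ≠ 0) {σ : ℝ}
    {X : Fin N → Fin d → ℝ} {Y : Fin N → ℕ} {f : (Fin d → ℝ) → ℝ} {i j : Fin N}
    (hij : Y i ≠ Y j) {w : Fin d → ℝ} (hf : ∀ x, f (x + w) = f x)
    (hw : lpNorm p (X i - X j - w) ≤ 2 * σ) : ¬ RobustMem p σ X Y f := by
  intro hrob
  set z := (1 / 2 : ℝ) • (X i - X j - w) with hz
  have hz_norm : lpNorm p z ≤ σ := by
    rw [hz, lpNorm_smul hp, abs_of_pos one_half_pos]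
    linarith
  have hi : f (X i - z) = Y i := hrob i _ (by rwa [sub_sub_cancel_left, lpNorm_neg])
  have hj : f (X j + z) = Y j := hrob j _ (by rwa [add_sub_cancel_left])
  have hshift : X i - z = X j + z + w := by rw [hz]; module
  exact hij (Nat.cast_injective (R := ℝ) (by rw [← hi, ← hj, hshift, hf]))

end Networks

theorem robust_memorization_lower_bound_q_general
    (N d k : ℕ) (p q : ℝ≥0∞) (σ δ : ℝ) (hN : 2 ≤ N) (hp : 0 < p) (hq : 0 < q)
    (hk : 1 ≤ k) (hkd : k < d) (hδ : 0 < δ)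
    (hratio : 2178 * (d : ℝ) ^ (max ((1 : ℝ) / 2 - rinv q) 0 + max (rinv p - 1 / 2) 0) *
      (N : ℝ) ^ (-(2 : ℝ) / (k : ℝ)) ≤ σ / δ) :
    ∃ (X : Fin N → Fin d → ℝ) (Y : Fin N → ℕ),
      (∀ i, 1 ≤ Y i ∧ Y i ≤ 2) ∧ Separated q δ X Y ∧
      ∀ net : MLP d 1, net.width ≤ k → ¬ RobustMem p σ X Y (fun x => net.eval x 0) := by
  obtain ⟨X, Y, hlabels, hY, hX, hnear⟩ := exists_dataset_nearModulo hN hk hkd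
  obtain ⟨c, hc, hc_le, hsep⟩ := exists_smul_separated hq.ne' hδ hY hX
  refine ⟨c • X, Y, hlabels, hsep, fun net hwidth ↦ ?_⟩
  obtain ⟨V, hV, hinv⟩ := net.exists_invariant_submodule
  obtain ⟨i, j, hij, w, hw, hdist⟩ := hnear V (hV.trans (by gcongr; exact max_le hk hwidth))
  refine not_robustMem_of_invariant hp.ne' hij (w := c • w)
    (fun x ↦ congrFun (hinv x _ (V.smul_mem c hw)) 0) ?_
  have hd : (0 : ℝ) < d := by exact_mod_cast k.zero_le.trans_lt hkd
  calc lpNorm p (c • X i - c • X j - c • w)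
      = c * lpNorm p (X i - X j - w) := by
        rw [← smul_sub, ← smul_sub, lpNorm_smul hp.ne', abs_of_pos hc]
    _ ≤ (δ * (d : ℝ) ^ max ((1 : ℝ) / 2 - rinv q) 0) *
          ((d : ℝ) ^ max (rinv p - 1 / 2) 0 * (4356 * (N : ℝ) ^ (-(2 : ℝ) / (k : ℝ)))) := by
        have hnorm := lpNorm_le_rpow_mul_lpNorm hp.ne' two_ne_zero (X i - X j - w)
        rw [show rinv 2 = 1 / 2 by simp [rinv]] at hnorm
        exact mul_le_mul hc_le (hnorm.trans (by gcongr)) (lpNorm_nonneg _ _) (by positivity)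
    _ = 2 * (2178 * (d : ℝ) ^ (max ((1 : ℝ) / 2 - rinv q) 0 + max (rinv p - 1 / 2) 0) *
          (N : ℝ) ^ (-(2 : ℝ) / (k : ℝ)) * δ) := by
        rw [Real.rpow_add hd]
        ring
    _ ≤ 2 * σ := by gcongr; exact (le_div_iff₀ hδ).1 hratio

/-- **Lower bound for robust memorization with small width, `l_q` separation**. -/
theorem robust_memorization_lower_bound_q
    (N d k : ℕ) (p q : ℝ≥0∞) (σ δ : ℝ)
    (hN : 2 ≤ N) (hd : 2 ≤ d) (hp : 0 < p) (hq : 1 ≤ q)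
    (hk1 : 1 ≤ k) (hkd : k ≤ d - 1) (hσ : 0 < σ) (hδ : 0 < δ)
    (hratio : σ / δ > 2416 *
      (d : ℝ) ^ (max ((1 : ℝ) / 2 - rinv q) 0 + max (rinv p - 1 / 2) 0) *
      (N : ℝ) ^ (-(2 : ℝ) / (k : ℝ))) :
    ∃ (X : Fin N → Fin d → ℝ) (Y : Fin N → ℕ),
      (∀ i, 1 ≤ Y i ∧ Y i ≤ 2) ∧ Separated q δ X Y ∧
      ∀ net : MLP d 1, net.width = k → ¬ RobustMem p σ X Y (fun x => net.eval x 0) := by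
  obtain ⟨X, Y, hlabels, hsep, hnet⟩ := robust_memorization_lower_bound_q_general N d k p q σ δ
    hN hp (one_pos.trans_le hq) hk1 (by omega) hδ (hratio.le.trans' (by gcongr; norm_num))
  exact ⟨X, Y, hlabels, hsep, fun net hwidth ↦ hnet net hwidth.le⟩

end
end

section
/- Let N, d be natural numbers at least 2, let 1 ≤ k ≤ d − 1, and let σ, δ > 0 with σ < δ/2. If 2σ/δ > 4832 · N^{−2/k}, then there exists a δ-separated dataset D of size N with 2 classes in ℝ^d that is not (σ, k)-preservable, i.e., no linear map T : ℝ^d → ℝ^k of rank k satisfies ‖a − a'‖₂ ≤ ‖T(a) − T(a')‖₂ for all differently labeled (x,y), (x',y') ∈ D and all a ∈ B₂^d(x, σ), a' ∈ B₂^d(x', σ). -/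
open scoped ENNReal BigOperators

noncomputable section

/-! Let `s² = 2σ/δ`. Choose a `1`-separated `1`-net `P` of the unit sphere of `ℝ^(k+1)` and, for
each pole `p ∈ P`, a set of about `s⁻ᵏ` points at scale `s` and another one at scale `s²` in the
hyperplane `pᗮ`, such that their differences form an `s²`-net of a ball of `pᗮ`. Together these sets
have only `O(1/s)ᵏ` points, whereas a one-scale `s²`-net would need `s⁻²ᵏ`. Shift the first set to
height `7` and the second one to height `6` along `p`, and label them by `1` and `2`. The height
difference `1` separates differently labeled points over the same pole, and points over different
poles are at distance at least `6 - 5 = 1`. Every line through the origin comes within `s²` of a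
difference `x - y`, because it meets `p + pᗮ` near `p` for the pole `p` closest to it. A linear map
of rank at most `k` kills some line of `ℝ^(k+1)`; after rescaling the minimal distance to `δ`,
moving `x` and `y` by at most `σ` puts their difference onto that line, so the map identifies two
distinct points of the balls around them. -/

section Nets

open Metric Module MeasureTheory

variable {E : Type*} [NormedAddCommGroup E] [NormedSpace ℝ E] [FiniteDimensional ℝ E]

lemma card_le_of_separated_of_norm_le {t : Finset E} {R ε : ℝ} (hR : 0 ≤ R) (hε : 0 < ε)
    (hball : ∀ x ∈ t, ‖x‖ ≤ R) (hsep : (t : Set E).Pairwise fun x y ↦ ε ≤ dist x y) :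
    (t.card : ℝ) ≤ (1 + 2 * R / ε) ^ finrank ℝ E := by
  borelize E
  let μ : Measure E := Measure.addHaar
  have volume_ball (x : E) {r : ℝ} (hr : 0 < r) :
      μ.real (ball x r) = r ^ finrank ℝ E * μ.real (ball 0 1) := by
    simp [measureReal_def, μ.addHaar_ball_of_pos x hr, hr.le]
  have hdisj : (t : Set E).PairwiseDisjoint fun x ↦ ball x (ε / 2) := fun x hx y hy hxy ↦
    ball_disjoint_ball (by linarith [hsep hx hy hxy])
  have hsub : ⋃ x ∈ t, ball x (ε / 2) ⊆ ball 0 (ε / 2 + R) :=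
    Set.iUnion₂_subset fun x hx ↦ ball_subset_ball' (by
      rw [dist_zero_right]
      linarith [hball x hx])
  have hvol : t.card * ((ε / 2) ^ finrank ℝ E * μ.real (ball 0 1)) ≤
      (ε / 2 + R) ^ finrank ℝ E * μ.real (ball 0 1) :=
    calc t.card * ((ε / 2) ^ finrank ℝ E * μ.real (ball 0 1))
        = ∑ x ∈ t, μ.real (ball x (ε / 2)) := by
          simp only [volume_ball _ (half_pos hε), Finset.sum_const, nsmul_eq_mul]
      _ = μ.real (⋃ x ∈ t, ball x (ε / 2)) :=
          (measureReal_biUnion_finset hdisj fun _ _ ↦ measurableSet_ball).symm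
      _ ≤ μ.real (ball 0 (ε / 2 + R)) := measureReal_mono hsub
      _ = (ε / 2 + R) ^ finrank ℝ E * μ.real (ball 0 1) := volume_ball 0 (by positivity)
  have hunit : 0 < μ.real (ball (0 : E) 1) :=
    ENNReal.toReal_pos (measure_ball_pos μ 0 one_pos).ne' measure_ball_lt_top.ne
  have hquot : 1 + 2 * R / ε = (ε / 2 + R) / (ε / 2) := by field_simp
  rw [hquot, div_pow, le_div_iff₀ (by positivity)]
  exact le_of_mul_le_mul_right (by rwa [mul_assoc]) hunit

lemma exists_separated_net {S : Set E} {R ε : ℝ} (hR : 0 ≤ R) (hε : 0 < ε)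
    (hS : S ⊆ closedBall 0 R) :
    ∃ t : Finset E, ↑t ⊆ S ∧ (t : Set E).Pairwise (fun x y ↦ ε < dist x y) ∧
      (∀ x ∈ S, ∃ y ∈ t, dist x y ≤ ε) ∧ (t.card : ℝ) ≤ (1 + 2 * R / ε) ^ finrank ℝ E := by
  lift ε to NNReal using hε.le
  have hε₀ : ε / 2 ≠ 0 := (half_pos (NNReal.coe_pos.1 hε)).ne'
  have hpack : packingNumber ε S ≠ ⊤ := by
    obtain ⟨N, -, hN, hcover⟩ := exists_finite_isCover_of_totallyBounded hε₀
      ((isCompact_closedBall (0 : E) R).totallyBounded.subset hS)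
    have hle := packingNumber_two_mul_le_externalCoveringNumber (ε / 2) S
    rw [mul_div_cancel₀ ε two_ne_zero] at hle
    exact ((hle.trans hcover.externalCoveringNumber_le_encard).trans_lt hN.encard_lt_top).ne
  have hfin : (maximalSeparatedSet ε S).Finite := by
    rwa [← Set.encard_ne_top_iff, encard_maximalSeparatedSet hpack]
  have hsub : ↑hfin.toFinset ⊆ S := by simpa using maximalSeparatedSet_subset
  have hsep : (hfin.toFinset : Set E).Pairwise fun x y ↦ (ε : ℝ) < dist x y := by
    rw [hfin.coe_toFinset]
    intro x hx y hy hxy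
    have h : (ε : ℝ≥0∞) < edist x y := isSeparated_maximalSeparatedSet hx hy hxy
    rwa [edist_nndist, ENNReal.coe_lt_coe, ← NNReal.coe_lt_coe, coe_nndist] at h
  refine ⟨hfin.toFinset, hsub, hsep, fun x hx ↦ ?_,
    card_le_of_separated_of_norm_le hR hε (fun x hx ↦ by simpa using hS (hsub hx))
      (hsep.mono' fun _ _ ↦ le_of_lt)⟩
  obtain ⟨y, hy, hxy⟩ : ∃ y ∈ maximalSeparatedSet ε S, edist x y ≤ ε :=
    isCover_maximalSeparatedSet hpack hx
  rw [edist_nndist, ENNReal.coe_le_coe, ← NNReal.coe_le_coe, coe_nndist] at hxy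
  exact ⟨y, by simpa using hy, hxy⟩

lemma exists_two_scale_net {R ρ ε : ℝ} (hR : 0 ≤ R) (hρ : 0 < ρ) (hε : 0 < ε) :
    ∃ A B : Finset E, (∀ a ∈ A, ‖a‖ ≤ R) ∧ (∀ b ∈ B, ‖b‖ ≤ ρ) ∧
      (A.card : ℝ) ≤ (1 + 2 * R / ρ) ^ finrank ℝ E ∧
      (B.card : ℝ) ≤ (1 + 2 * ρ / ε) ^ finrank ℝ E ∧
      ∀ w : E, ‖w‖ ≤ R → ∃ a ∈ A, ∃ b ∈ B, ‖a - b - w‖ ≤ ε := by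
  obtain ⟨A, hA, -, hA_cover, hA_card⟩ := exists_separated_net hR hρ
    (subset_refl (closedBall (0 : E) R))
  obtain ⟨B, hB, -, hB_cover, hB_card⟩ := exists_separated_net hρ.le hε
    (subset_refl (closedBall (0 : E) ρ))
  refine ⟨A, B, fun a ha ↦ by simpa using hA ha, fun b hb ↦ by simpa using hB hb,
    hA_card, hB_card, fun w hw ↦ ?_⟩
  obtain ⟨a, ha, hwa⟩ := hA_cover w (by simpa using hw)
  obtain ⟨b, hb, hab⟩ := hB_cover (a - w) (by
    rwa [mem_closedBall_zero_iff, ← dist_eq_norm, dist_comm])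
  exact ⟨a, ha, b, hb, by rwa [sub_right_comm, ← dist_eq_norm]⟩

end Nets

section NearLines

variable {E : Type*} [NormedAddCommGroup E] [NormedSpace ℝ E] {ε : ℝ} {S₁ S₂ : Finset E}

/-- Every line through the origin has a nonzero point within `ε` of some difference `x - y` with
`x ∈ S₁` and `y ∈ S₂`. This is what prevents a linear map with nontrivial kernel from preserving
the distances between `S₁` and `S₂` robustly. -/
def DifferencesNearLines (ε : ℝ) (S₁ S₂ : Finset E) : Prop :=
  ∀ v : E, v ≠ 0 → ∃ x ∈ S₁, ∃ y ∈ S₂, ∃ c : ℝ, c ≠ 0 ∧ ‖x - y - c • v‖ ≤ ε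

namespace DifferencesNearLines

lemma of_norm_eq_one
    (h : ∀ u : E, ‖u‖ = 1 → ∃ x ∈ S₁, ∃ y ∈ S₂, ∃ c : ℝ, c ≠ 0 ∧ ‖x - y - c • u‖ ≤ ε) :
    DifferencesNearLines ε S₁ S₂ := by
  intro v hv
  obtain ⟨x, hx, y, hy, c, hc, hxy⟩ := h (‖v‖⁻¹ • v) (by simp [norm_smul, hv])
  exact ⟨x, hx, y, hy, c * ‖v‖⁻¹, mul_ne_zero hc (inv_ne_zero (norm_ne_zero_iff.2 hv)),
    by rwa [mul_smul]⟩

lemma mono {ε' : ℝ} (h : DifferencesNearLines ε S₁ S₂) (hε : ε ≤ ε') :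
    DifferencesNearLines ε' S₁ S₂ := fun v hv ↦
  have ⟨x, hx, y, hy, c, hc, hxy⟩ := h v hv
  ⟨x, hx, y, hy, c, hc, hxy.trans hε⟩

lemma product_nonempty [Nontrivial E] (h : DifferencesNearLines ε S₁ S₂) :
    (S₁ ×ˢ S₂).Nonempty :=
  have ⟨v, hv⟩ := exists_ne (0 : E)
  have ⟨x, hx, y, hy, _⟩ := h v hv
  ⟨(x, y), Finset.mk_mem_product hx hy⟩

open scoped Pointwise in
lemma smul [DecidableEq E] (h : DifferencesNearLines ε S₁ S₂) {t : ℝ} (ht : t ≠ 0) :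
    DifferencesNearLines (|t| * ε) (t • S₁) (t • S₂) := by
  intro v hv
  obtain ⟨x, hx, y, hy, c, hc, hxy⟩ := h v hv
  refine ⟨t • x, Finset.smul_mem_smul_finset hx, t • y, Finset.smul_mem_smul_finset hy,
    t * c, mul_ne_zero ht hc, ?_⟩
  rw [mul_smul, ← smul_sub, ← smul_sub, norm_smul, Real.norm_eq_abs]
  gcongr

open scoped Pointwise in
lemma exists_rescale [Nontrivial E] (h : DifferencesNearLines ε S₁ S₂) (hε : 0 ≤ ε)
    (hsep : ∀ x ∈ S₁, ∀ y ∈ S₂, 1 ≤ ‖x - y‖) {δ : ℝ} (hδ : 0 < δ) :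
    ∃ T₁ T₂ : Finset E, T₁.card = S₁.card ∧ T₂.card = S₂.card ∧
      (∀ x ∈ T₁, ∀ y ∈ T₂, δ ≤ ‖x - y‖) ∧ (∃ x ∈ T₁, ∃ y ∈ T₂, ‖x - y‖ = δ) ∧
      DifferencesNearLines (δ * ε) T₁ T₂ := by
  classical
  obtain ⟨⟨x₀, y₀⟩, hmem, hmin⟩ :=
    (S₁ ×ˢ S₂).exists_min_image (fun q ↦ ‖q.1 - q.2‖) h.product_nonempty
  obtain ⟨hx₀, hy₀⟩ := Finset.mem_product.1 hmem
  have hm : 1 ≤ ‖x₀ - y₀‖ := hsep x₀ hx₀ y₀ hy₀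
  set t : ℝ := δ / ‖x₀ - y₀‖
  have ht : 0 < t := by positivity
  have htδ : t ≤ δ := div_le_self hδ.le hm
  have hmul : t * ‖x₀ - y₀‖ = δ := div_mul_cancel₀ δ (by positivity)
  have norm_smul_sub_smul (x y : E) : ‖t • x - t • y‖ = t * ‖x - y‖ := by
    rw [← smul_sub, norm_smul, Real.norm_of_nonneg ht.le]
  refine ⟨t • S₁, t • S₂, ?_, ?_, ?_,
    ⟨t • x₀, Finset.smul_mem_smul_finset hx₀, t • y₀, Finset.smul_mem_smul_finset hy₀, ?_⟩,
    (h.smul ht.ne').mono (by rw [abs_of_pos ht]; gcongr)⟩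
  · exact Finset.card_image_of_injective _ (smul_right_injective E ht.ne')
  · exact Finset.card_image_of_injective _ (smul_right_injective E ht.ne')
  · intro _ htx _ hty
    obtain ⟨x, hx, rfl⟩ := Finset.mem_smul_finset.1 htx
    obtain ⟨y, hy, rfl⟩ := Finset.mem_smul_finset.1 hty
    rw [norm_smul_sub_smul, ← hmul]
    exact mul_le_mul_of_nonneg_left (hmin (x, y) (Finset.mk_mem_product hx hy)) ht.le
  · rw [norm_smul_sub_smul, hmul]

lemma exists_sub_mem {σ : ℝ} (h : DifferencesNearLines (2 * σ) S₁ S₂) {K : Submodule ℝ E}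
    (hK : K ≠ ⊥) :
    ∃ x ∈ S₁, ∃ y ∈ S₂, ∃ a a' : E, ‖a - x‖ ≤ σ ∧ ‖a' - y‖ ≤ σ ∧ a ≠ a' ∧ a - a' ∈ K := by
  obtain ⟨v, hvK, hv⟩ := K.exists_mem_ne_zero_of_ne_bot hK
  obtain ⟨x, hx, y, hy, c, hc, hxy⟩ := h v hv
  set q : E := (2⁻¹ : ℝ) • (x - y - c • v)
  have hq : ‖q‖ ≤ σ := by
    rw [norm_smul, Real.norm_of_nonneg (by norm_num)]
    linarith
  have hdiff : x - q - (y + q) = c • v := by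
    simp only [q]
    module
  refine ⟨x, hx, y, hy, x - q, y + q, ?_, ?_, ?_, ?_⟩
  · rwa [sub_sub_cancel_left, norm_neg]
  · rwa [add_sub_cancel_left]
  · rw [← sub_ne_zero, hdiff]
    exact smul_ne_zero hc hv
  · rw [hdiff]
    exact K.smul_mem c hvK

end DifferencesNearLines

end NearLines

section TangentPoints

open Module
open scoped RealInnerProductSpace

variable {F : Type*} [NormedAddCommGroup F] [InnerProductSpace ℝ F]

lemma exists_smul_sub_mem_orthogonal_norm_le_two {p u : F} (hp : ‖p‖ = 1) (hu : ‖u‖ = 1)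
    (hpu : ‖u - p‖ ≤ 1) :
    ∃ c : ℝ, c ≠ 0 ∧ c • u - p ∈ (ℝ ∙ p)ᗮ ∧ ‖c • u - p‖ ≤ 2 := by
  have hhalf : 1 / 2 ≤ ⟪p, u⟫ := by
    have hsq := norm_sub_sq_real u p
    rw [hp, hu, real_inner_comm] at hsq
    nlinarith [norm_nonneg (u - p)]
  have hpos : 0 < ⟪p, u⟫ := by linarith
  have hinv : ⟪p, u⟫⁻¹ ≤ 2 := by
    rw [inv_le_comm₀ hpos two_pos]
    linarith
  refine ⟨⟪p, u⟫⁻¹, inv_ne_zero hpos.ne', ?_, ?_⟩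
  · rw [Submodule.mem_orthogonal_singleton_iff_inner_right, inner_sub_right, inner_smul_right,
      real_inner_self_eq_norm_sq, hp, inv_mul_cancel₀ hpos.ne']
    norm_num
  · have hsq : ‖⟪p, u⟫⁻¹ • u - p‖ ^ 2 = ⟪p, u⟫⁻¹ ^ 2 - 1 := by
      rw [norm_sub_sq_real, real_inner_smul_left, real_inner_comm p u, norm_smul, hu, hp, mul_one,
        inv_mul_cancel₀ hpos.ne', Real.norm_eq_abs, sq_abs]
      ring
    have : 0 < ⟪p, u⟫⁻¹ := inv_pos.2 hpos
    exact le_of_sq_le_sq (by nlinarith) two_pos.le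

lemma norm_le_norm_add_of_mem_orthogonal {p w : F} (hw : w ∈ (ℝ ∙ p)ᗮ) : ‖p‖ ≤ ‖p + w‖ := by
  have hpw := norm_add_sq_eq_norm_sq_add_norm_sq_real
    (Submodule.mem_orthogonal_singleton_iff_inner_right.1 hw)
  nlinarith [norm_nonneg (p + w), norm_nonneg p, mul_self_nonneg ‖w‖]

lemma one_le_norm_tangent_sub_tangent {p q : F} {a : (ℝ ∙ p)ᗮ} {b : (ℝ ∙ q)ᗮ} (hp : ‖p‖ = 1)
    (hpq : p ≠ q → 1 ≤ ‖p - q‖) (ha : ‖a‖ ≤ 2) (hb : ‖b‖ ≤ 2) :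
    1 ≤ ‖((7 : ℝ) • p + a) - ((6 : ℝ) • q + b)‖ := by
  obtain rfl | hne := eq_or_ne p q
  · have hsplit : (7 : ℝ) • p + (a : F) - ((6 : ℝ) • p + b) = p + ↑(a - b) := by
      push_cast
      module
    rw [hsplit, ← hp]
    exact norm_le_norm_add_of_mem_orthogonal (a - b).2
  · have hsplit :
        (7 : ℝ) • p + (a : F) - ((6 : ℝ) • q + b) = (6 : ℝ) • (p - q) + (p + a - b) := by
      module
    have hfar : 6 ≤ ‖(6 : ℝ) • (p - q)‖ := by
      rw [norm_smul, Real.norm_of_nonneg (by norm_num)]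
      linarith [hpq hne]
    have hnear : ‖p + a - b‖ ≤ 5 := by
      calc ‖p + a - b‖ ≤ ‖p‖ + ‖(a : F)‖ + ‖(b : F)‖ := norm_sub_le_of_le (norm_add_le _ _) le_rfl
        _ ≤ 5 := by
          rw [← Submodule.coe_norm, ← Submodule.coe_norm]
          linarith
    rw [hsplit]
    linarith [norm_le_add_norm_add ((6 : ℝ) • (p - q)) (p + a - b)]

open Classical in
/-- The points `h • p + a` for `p ∈ P` and `a ∈ A p`: copies of the finite sets `A p` of vectors
orthogonal to the poles `p`, moved to height `h` above the origin. -/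
def tangentPoints (h : ℝ) (P : Finset F) (A : ∀ p : F, Finset (ℝ ∙ p)ᗮ) : Finset F :=
  (P.sigma A).image fun q ↦ h • q.1 + (q.2 : F)

lemma mem_tangentPoints {h : ℝ} {P : Finset F} {A : ∀ p : F, Finset (ℝ ∙ p)ᗮ} {x : F} :
    x ∈ tangentPoints h P A ↔ ∃ p ∈ P, ∃ a ∈ A p, h • p + (a : F) = x := by
  simp only [tangentPoints, Finset.mem_image, Finset.mem_sigma, Sigma.exists, exists_and_left,
    and_assoc]

lemma card_tangentPoints_le {h M : ℝ} {P : Finset F} {A : ∀ p : F, Finset (ℝ ∙ p)ᗮ}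
    (hA : ∀ p ∈ P, ((A p).card : ℝ) ≤ M) : ((tangentPoints h P A).card : ℝ) ≤ P.card * M :=
  calc ((tangentPoints h P A).card : ℝ) ≤ ∑ p ∈ P, ((A p).card : ℝ) := by
        classical
        exact_mod_cast Finset.card_image_le.trans_eq (Finset.card_sigma P A)
    _ ≤ P.card * M := (Finset.sum_le_card_nsmul P _ M hA).trans_eq (nsmul_eq_mul _ _)

lemma differencesNearLines_tangentPoints {h ε : ℝ} {P : Finset F}
    {A B : ∀ p : F, Finset (ℝ ∙ p)ᗮ} (hP : ∀ p ∈ P, ‖p‖ = 1)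
    (hP_cover : ∀ u : F, ‖u‖ = 1 → ∃ p ∈ P, ‖u - p‖ ≤ 1)
    (hAB : ∀ p ∈ P, ∀ w : (ℝ ∙ p)ᗮ, ‖w‖ ≤ 2 → ∃ a ∈ A p, ∃ b ∈ B p, ‖a - b - w‖ ≤ ε) :
    DifferencesNearLines ε (tangentPoints (h + 1) P A) (tangentPoints h P B) := by
  refine .of_norm_eq_one fun u hu ↦ ?_
  obtain ⟨p, hp, hpu⟩ := hP_cover u hu
  obtain ⟨c, hc, horth, hnorm⟩ := exists_smul_sub_mem_orthogonal_norm_le_two (hP p hp) hu hpu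
  obtain ⟨a, ha, b, hb, hab⟩ := hAB p hp ⟨c • u - p, horth⟩ hnorm
  refine ⟨(h + 1) • p + (a : F), mem_tangentPoints.2 ⟨p, hp, a, ha, rfl⟩,
    h • p + (b : F), mem_tangentPoints.2 ⟨p, hp, b, hb, rfl⟩, c, hc, ?_⟩
  have hsplit : (h + 1) • p + (a : F) - (h • p + b) - c • u = a - b - (c • u - p) := by module
  rw [hsplit]
  exact hab

lemma three_pow_succ_mul_add_le {k : ℕ} (hk : k ≠ 0) {s : ℝ} (hs : 0 < s) :
    (3 : ℝ) ^ (k + 1) * ((4 / s) ^ k + (11 / 3 / s) ^ k) ≤ (69 / s) ^ k :=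
  calc (3 : ℝ) ^ (k + 1) * ((4 / s) ^ k + (11 / 3 / s) ^ k)
      = 3 * ((12 / s) ^ k + (11 / s) ^ k) := by
        rw [pow_succ', mul_assoc, mul_add, ← mul_pow, ← mul_pow]
        ring_nf
    _ ≤ 3 ^ k * (12 / s + 11 / s) ^ k := by
        gcongr
        · exact le_self_pow₀ (by norm_num) hk
        · exact pow_add_pow_le (by positivity) (by positivity) hk
    _ = (69 / s) ^ k := by
        rw [← mul_pow]
        ring_nf

theorem exists_one_separated_differencesNearLines [FiniteDimensional ℝ F] {k : ℕ} (hk : k ≠ 0)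
    (hF : finrank ℝ F = k + 1) {s : ℝ} (hs : 0 < s) (hs1 : s ≤ 1) :
    ∃ S₁ S₂ : Finset F, (S₁.card + S₂.card : ℝ) ≤ (69 / s) ^ k ∧
      (∀ x ∈ S₁, ∀ y ∈ S₂, 1 ≤ ‖x - y‖) ∧ DifferencesNearLines (s ^ 2) S₁ S₂ := by
  obtain ⟨P, hP, hP_sep, hP_cover, hP_card⟩ :=
    exists_separated_net zero_le_one one_pos (Metric.sphere_subset_closedBall (x := (0 : F)))
  replace hP : ∀ p ∈ P, ‖p‖ = 1 := fun p hp ↦ by simpa using hP hp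
  -- The factor `4 / 3` balances the two cardinalities: the scale `s` itself would give `72 / s`.
  choose A B hA hB hA_card hB_card hAB using fun p : F ↦ exists_two_scale_net (E := (ℝ ∙ p)ᗮ)
    two_pos.le (by positivity : 0 < 4 / 3 * s) (pow_pos hs 2)
  have hfinrank (p : F) (hp : p ∈ P) : finrank ℝ (ℝ ∙ p)ᗮ = k :=
    have : Fact (finrank ℝ F = k + 1) := ⟨hF⟩
    Submodule.finrank_orthogonal_span_singleton (norm_ne_zero_iff.1 (by simp [hP p hp]))
  replace hP_card : (P.card : ℝ) ≤ 3 ^ (k + 1) := hP_card.trans_eq (by norm_num [hF])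
  replace hA_card (p : F) (hp : p ∈ P) : ((A p).card : ℝ) ≤ (4 / s) ^ k := by
    refine (hfinrank p hp ▸ hA_card p).trans (pow_le_pow_left₀ (by positivity) ?_ k)
    field_simp
    linarith
  replace hB_card (p : F) (hp : p ∈ P) : ((B p).card : ℝ) ≤ (11 / 3 / s) ^ k := by
    refine (hfinrank p hp ▸ hB_card p).trans (pow_le_pow_left₀ (by positivity) ?_ k)
    field_simp
    linarith
  refine ⟨tangentPoints (6 + 1) P A, tangentPoints 6 P B, ?_, fun x hx y hy ↦ ?_,
    differencesNearLines_tangentPoints hP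
      (fun u hu ↦ by simpa [dist_eq_norm] using hP_cover u (by simpa using hu))
      fun p _ ↦ hAB p⟩
  · calc ((tangentPoints (6 + 1) P A).card + (tangentPoints 6 P B).card : ℝ)
        ≤ P.card * (4 / s) ^ k + P.card * (11 / 3 / s) ^ k :=
          add_le_add (card_tangentPoints_le hA_card) (card_tangentPoints_le hB_card)
      _ ≤ 3 ^ (k + 1) * ((4 / s) ^ k + (11 / 3 / s) ^ k) := by
          rw [← mul_add]
          gcongr
      _ ≤ (69 / s) ^ k := three_pow_succ_mul_add_le hk hs
  · obtain ⟨p, hp, a, ha, rfl⟩ := mem_tangentPoints.1 hx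
    obtain ⟨q, hq, b, hb, rfl⟩ := mem_tangentPoints.1 hy
    rw [show (6 + 1 : ℝ) = 7 by norm_num]
    exact one_le_norm_tangent_sub_tangent (hP p hp)
      (fun hne ↦ dist_eq_norm p q ▸ (hP_sep hp hq hne).le) (hA p a ha)
      ((hB q b hb).trans (by linarith))

theorem exists_separated_differencesNearLines [FiniteDimensional ℝ F] {k : ℕ} (hk : k ≠ 0)
    (hF : finrank ℝ F = k + 1) {ε δ : ℝ} (hε : 0 < ε) (hεδ : ε ≤ δ) :
    ∃ S₁ S₂ : Finset F, (S₁.card + S₂.card : ℝ) ≤ (69 / √(ε / δ)) ^ k ∧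
      (∀ x ∈ S₁, ∀ y ∈ S₂, δ ≤ ‖x - y‖) ∧ (∃ x ∈ S₁, ∃ y ∈ S₂, ‖x - y‖ = δ) ∧
      DifferencesNearLines ε S₁ S₂ := by
  have hδ : 0 < δ := hε.trans_le hεδ
  have : Nontrivial F := nontrivial_of_finrank_pos (R := ℝ) (by omega)
  obtain ⟨S₁, S₂, hcard, hsep, hlines⟩ := exists_one_separated_differencesNearLines hk hF
    (Real.sqrt_pos.2 (div_pos hε hδ)) (Real.sqrt_le_one.2 ((div_le_one hδ).2 hεδ))
  obtain ⟨T₁, T₂, hT₁, hT₂, hδ_le, hδ_eq, hT⟩ := hlines.exists_rescale (sq_nonneg _) hsep hδ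
  rw [Real.sq_sqrt (div_pos hε hδ).le, mul_div_cancel₀ ε hδ.ne'] at hT
  exact ⟨T₁, T₂, by rwa [hT₁, hT₂], hδ_le, hδ_eq, hT⟩

end TangentPoints

section Dataset

open Module

lemma exists_fin_range_eq {α : Type*} {s : Finset α} (hs : s.Nonempty) {N : ℕ} (hN : s.card ≤ N) :
    ∃ f : Fin N → α, Set.range f = s := by
  have : Nonempty s := hs.to_subtype
  obtain ⟨g⟩ : Nonempty (s ↪ Fin N) := Function.Embedding.nonempty_of_card_le (by simpa using hN)
  refine ⟨(↑) ∘ Function.invFun g, ?_⟩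
  rw [(Function.invFun_surjective g.injective).range_comp, Subtype.range_coe]

lemma exists_two_labeling {α : Type*} {S₁ S₂ : Finset α} (h : S₁.Nonempty) {N : ℕ}
    (hN : S₁.card + S₂.card ≤ N) :
    ∃ (X : Fin N → α) (Y : Fin N → ℕ), (∀ i, 1 ≤ Y i ∧ Y i ≤ 2) ∧
      (∀ i j, Y i ≠ Y j → X i ∈ S₁ ∧ X j ∈ S₂ ∨ X i ∈ S₂ ∧ X j ∈ S₁) ∧
      ∀ x ∈ S₁, ∀ y ∈ S₂, ∃ i j, Y i ≠ Y j ∧ X i = x ∧ X j = y := by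
  classical
  obtain ⟨f, hf⟩ := exists_fin_range_eq (s := S₁ ×ˢ {1} ∪ S₂ ×ˢ {2}) (N := N)
    ((h.product (Finset.singleton_nonempty 1)).inl) (by
      grw [Finset.card_union_le]
      simpa using hN)
  have hmem (x : α) (n : ℕ) : (∃ i, f i = (x, n)) ↔ x ∈ S₁ ∧ n = 1 ∨ x ∈ S₂ ∧ n = 2 := by
    rw [← Set.mem_range, hf]
    simp only [Finset.coe_union, Set.mem_union, Finset.mem_coe, Finset.mem_product,
      Finset.mem_singleton]
  have hlabel (i : Fin N) : (f i).1 ∈ S₁ ∧ (f i).2 = 1 ∨ (f i).1 ∈ S₂ ∧ (f i).2 = 2 :=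
    (hmem _ _).1 ⟨i, rfl⟩
  refine ⟨fun i ↦ (f i).1, fun i ↦ (f i).2, fun i ↦ ?_, fun i j hij ↦ ?_, fun x hx y hy ↦ ?_⟩
  · rcases hlabel i with ⟨-, hi⟩ | ⟨-, hi⟩ <;> simp [hi]
  · have := hlabel i
    have := hlabel j
    grind
  · obtain ⟨i, hi⟩ := (hmem x 1).2 (.inl ⟨hx, rfl⟩)
    obtain ⟨j, hj⟩ := (hmem y 2).2 (.inr ⟨hy, rfl⟩)
    exact ⟨i, j, by simp [hi, hj]⟩

lemma exists_submodule_finrank_eq {K V : Type*} [DivisionRing K] [AddCommGroup V] [Module K V]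
    {n : ℕ} (hn : n ≤ finrank K V) : ∃ W : Submodule K V, finrank K W = n := by
  obtain ⟨v, hv⟩ := exists_linearIndependent_of_le_finrank hn
  exact ⟨_, (finrank_span_eq_card hv).trans (Fintype.card_fin n)⟩

lemma div_sqrt_pow_le_of_sq_mul_rpow_le {C N r : ℝ} {k : ℕ} (hC : 0 ≤ C) (hN : 0 < N)
    (hk : k ≠ 0) (h : C ^ 2 * N ^ (-2 / k : ℝ) ≤ r) : (C / √r) ^ k ≤ N := by
  have hroot : (N ^ (1 / k : ℝ)) ^ k = N := by
    rw [one_div, Real.rpow_inv_natCast_pow hN.le hk]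
  have hsq : N ^ (-2 / k : ℝ) = ((N ^ (1 / k : ℝ)) ^ 2)⁻¹ := by
    rw [← Real.rpow_mul_natCast hN.le, ← Real.rpow_neg hN.le]
    ring_nf
  have hpos : 0 < N ^ (1 / k : ℝ) := by positivity
  rw [hsq, ← div_eq_mul_inv, ← div_pow] at h
  calc (C / √r) ^ k ≤ (N ^ (1 / k : ℝ)) ^ k := by
        refine pow_le_pow_left₀ (by positivity) (div_le_of_le_mul₀ (by positivity) hpos.le ?_) k
        rw [← div_le_iff₀' hpos]
        exact Real.le_sqrt_of_sq_le h
    _ = N := hroot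

lemma lpNorm_two_ofLp {d : ℕ} (x : EuclideanSpace ℝ (Fin d)) : lpNorm 2 x.ofLp = ‖x‖ := by
  rw [EuclideanSpace.norm_eq, lpNorm, if_neg (by norm_num), Real.sqrt_eq_rpow]
  simp

lemma not_preserves_of_mulVec_eq {N d m : ℕ} {σ : ℝ} {X : Fin N → Fin d → ℝ} {Y : Fin N → ℕ}
    {T : Matrix (Fin m) (Fin d) ℝ} {i j : Fin N} (hij : Y i ≠ Y j)
    {a a' : EuclideanSpace ℝ (Fin d)} (ha : lpNorm 2 (a.ofLp - X i) ≤ σ)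
    (ha' : lpNorm 2 (a'.ofLp - X j) ≤ σ) (hne : a ≠ a')
    (hT : T.mulVec a.ofLp = T.mulVec a'.ofLp) : ¬ Preserves σ X Y T := by
  intro hpres
  have hle := hpres i j hij a.ofLp a'.ofLp ha ha'
  rw [hT, sub_self, ← WithLp.ofLp_sub, lpNorm_two_ofLp, ← WithLp.ofLp_zero 2, lpNorm_two_ofLp,
    norm_zero, norm_le_zero_iff, sub_eq_zero] at hle
  exact hne hle

lemma ker_domRestrict_ne_bot_of_finrank_range_lt {K V V' : Type*} [DivisionRing K]
    [AddCommGroup V] [Module K V] [AddCommGroup V'] [Module K V'] [FiniteDimensional K V]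
    {L : V →ₗ[K] V'} {W : Submodule K V} (h : finrank K L.range < finrank K W) :
    (L.domRestrict W).ker ≠ ⊥ := by
  intro hker
  have hrange : (L.domRestrict W).range ≤ L.range := LinearMap.range_comp_le_range W.subtype L
  have hle := Submodule.finrank_mono hrange
  rw [LinearMap.finrank_range_of_inj (LinearMap.ker_eq_bot.1 hker)] at hle
  exact h.not_ge hle

lemma not_preserves_of_rank_lt_finrank {N d m : ℕ} {σ : ℝ}
    {W : Submodule ℝ (EuclideanSpace ℝ (Fin d))} {S₁ S₂ : Finset W}
    (hlines : DifferencesNearLines (2 * σ) S₁ S₂) {X : Fin N → W} {Y : Fin N → ℕ}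
    (hXY : ∀ x ∈ S₁, ∀ y ∈ S₂, ∃ i j, Y i ≠ Y j ∧ X i = x ∧ X j = y)
    {T : Matrix (Fin m) (Fin d) ℝ} (hT : T.rank < finrank ℝ W) :
    ¬ Preserves σ (fun i ↦ (X i).1.ofLp) Y T := by
  let L : EuclideanSpace ℝ (Fin d) →ₗ[ℝ] (Fin m → ℝ) :=
    T.mulVecLin ∘ₗ (WithLp.linearEquiv 2 ℝ (Fin d → ℝ)).toLinearMap
  have hrank : finrank ℝ L.range = T.rank := by
    rw [LinearEquiv.range_comp, Matrix.rank]
  obtain ⟨x, hx, y, hy, a, a', ha, ha', hne, hker⟩ :=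
    hlines.exists_sub_mem (ker_domRestrict_ne_bot_of_finrank_range_lt (hrank ▸ hT))
  obtain ⟨i, j, hij, rfl, rfl⟩ := hXY x hx y hy
  refine not_preserves_of_mulVec_eq hij (a := a) (a' := a') ?_ ?_ (Subtype.coe_injective.ne hne) ?_
  · rwa [← WithLp.ofLp_sub, lpNorm_two_ofLp]
  · rwa [← WithLp.ofLp_sub, lpNorm_two_ofLp]
  · exact LinearMap.sub_mem_ker_iff.1 hker

end Dataset

theorem not_preservable_of_large_ratio_general {N d k : ℕ} {σ δ : ℝ} (hN : N ≠ 0) (hk : k ≠ 0)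
    (hkd : k < d) (hδ : 0 < δ) (hσδ : 2 * σ ≤ δ)
    (hratio : 4761 * (N : ℝ) ^ (-2 / k : ℝ) ≤ 2 * σ / δ) :
    ∃ (X : Fin N → Fin d → ℝ) (Y : Fin N → ℕ), (∀ i, 1 ≤ Y i ∧ Y i ≤ 2) ∧ Separated 2 δ X Y ∧
      ∀ (m : ℕ) (T : Matrix (Fin m) (Fin d) ℝ), T.rank ≤ k → ¬ Preserves σ X Y T := by
  have hNpos : (0 : ℝ) < N := by positivity
  have hσ : 0 < 2 * σ := by
    have hpos : 0 < 2 * σ / δ := lt_of_lt_of_le (by positivity) hratio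
    exact (div_pos_iff_of_pos_right hδ).1 hpos
  obtain ⟨W, hW⟩ := exists_submodule_finrank_eq (K := ℝ) (V := EuclideanSpace ℝ (Fin d))
    (n := k + 1) (by simpa using hkd)
  obtain ⟨S₁, S₂, hcard, hδ_le, ⟨x, hx, y, hy, hxy⟩, hlines⟩ :=
    exists_separated_differencesNearLines hk hW hσ hσδ
  have hcardN : S₁.card + S₂.card ≤ N := by
    exact_mod_cast hcard.trans
      (div_sqrt_pow_le_of_sq_mul_rpow_le (by norm_num) hNpos hk (by norm_num only; exact hratio))
  obtain ⟨X, Y, hY, hX, hXY⟩ := exists_two_labeling ⟨x, hx⟩ hcardN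
  have hnorm (i j : Fin N) : lpNorm 2 ((X i).1.ofLp - (X j).1.ofLp) = ‖X i - X j‖ := by
    rw [← WithLp.ofLp_sub, lpNorm_two_ofLp, ← Submodule.coe_sub, Submodule.coe_norm]
  refine ⟨fun i ↦ (X i).1.ofLp, Y, hY, ⟨fun i j hij ↦ ?_, ?_⟩,
    fun m T hT ↦ not_preserves_of_rank_lt_finrank hlines hXY (by omega)⟩
  · rw [hnorm]
    obtain ⟨hi, hj⟩ | ⟨hi, hj⟩ := hX i j hij
    · exact hδ_le _ hi _ hj
    · exact norm_sub_rev (X i) (X j) ▸ hδ_le _ hj _ hi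
  · obtain ⟨i, j, hij, rfl, rfl⟩ := hXY x hx y hy
    exact ⟨i, j, hij, (hnorm i j).trans hxy⟩

/-- **Existence of a non-preservable dataset when the ratio is large**. -/
theorem not_preservable_of_large_ratio
    (N d k : ℕ) (σ δ : ℝ)
    (hN : 2 ≤ N) (hd : 2 ≤ d) (hk1 : 1 ≤ k) (hkd : k ≤ d - 1)
    (hσ : 0 < σ) (hδ : 0 < δ) (hσδ : σ < δ / 2)
    (hratio : 2 * σ / δ > 4832 * (N : ℝ) ^ (-(2 : ℝ) / (k : ℝ))) :
    ∃ (X : Fin N → Fin d → ℝ) (Y : Fin N → ℕ),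
      (∀ i, 1 ≤ Y i ∧ Y i ≤ 2) ∧ Separated 2 δ X Y ∧
      ∀ T : Matrix (Fin k) (Fin d) ℝ, T.rank = k → ¬ Preserves σ X Y T := by
  have hratio' : 4761 * (N : ℝ) ^ (-2 / k : ℝ) ≤ 2 * σ / δ := by
    have : 0 ≤ (N : ℝ) ^ (-2 / k : ℝ) := by positivity
    linarith
  obtain ⟨X, Y, hY, hsep, hT⟩ := not_preservable_of_large_ratio_general (by omega) (by omega)
    (by omega : k < d) hδ (by linarith) hratio'
  exact ⟨X, Y, hY, hsep, fun T hrank ↦ hT k T hrank.le⟩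

end
end

section
/- Let p ∈ (1, ∞) be a real number that is not a natural number, and let 0 < ε < 1. Then there is a universal constant C₀ such that there exists a feedforward ReLU neural network g : ℝ → ℝ of width 9 and depth at most C₀ · p · ε^{−1/p} · (log₂(p·ε^{−1}) + p) such that |g(α) − α^p| < ε for every α ∈ [0, 1]. -/
/-!
Expand `α ^ p = (1 - t) ^ p`, where `t = 1 - α`, in its binomial series. If `T` is the truncation
after `n + 1` terms, then Pascal's rule collapses the derivative of `T(t) (1 - t) ^ (-p)` to
`C(p - 1, n) (-t) ^ n` times that of `(1 - t) ^ (-p)`. Comparing derivatives gives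
`|T(t) - (1 - t) ^ p| ≤ |C(p - 1, n)|` on `[0, 1]`. By Bernoulli's inequality,
`|C(p - 1, n)| (n + 1) ^ p` is nonincreasing in `n` once `n + 1 ≥ p`, so the error is of order
`(4 p / (n + 1)) ^ p` and `N ≈ 4 p ε ^ (-1 / p)` terms suffice.

The powers of `t` are computed one multiplication at a time from the polarization
`t s = ((t + s) / 2) ^ 2 - (|t - s| / 2) ^ 2` and Yarotsky's approximation of the square by iterated
tent maps, which is accurate to `4 ^ (-K - 1)` after `K` layers. Since the coefficients are bounded
by `2 ^ p`, some `K` of order `log₂ (p / ε) + p` suffices. Keeping `t`, the signed partial sum, the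
signed approximate product, and two ReLUs for each of the two tent iterations takes
`1 + 2 + 2 + 4 = 9` neurons.
-/

open scoped ENNReal BigOperators

noncomputable section

open Finset (range)

/-! ### Generalized binomial coefficients -/

section Choose

lemma succ_mul_choose_add_one_succ {R : Type*} [Ring R] [BinomialRing R] (r : R) (n : ℕ) :
    (n + 1) * Ring.choose (r + 1) (n + 1) = (r + 1) * Ring.choose r n := by
  simpa [nsmul_eq_mul] using Ring.choose_add_smul_choose r n 1

lemma succ_mul_choose_succ {R : Type*} [Ring R] [BinomialRing R] (r : R) (n : ℕ) :
    (n + 1) * Ring.choose r (n + 1) = (r - n) * Ring.choose r n := by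
  have h := succ_mul_choose_add_one_succ r n
  rw [Ring.choose_succ_succ, mul_add, ← eq_sub_iff_add_eq'] at h
  rw [h]
  noncomm_ring

lemma abs_choose_le_one {q : ℝ} (hq₀ : 0 ≤ q) (hq₁ : q ≤ 1) (m : ℕ) : |Ring.choose q m| ≤ 1 := by
  induction m with
  | zero => simp
  | succ m ih =>
    have hm : (0 : ℝ) < m + 1 := by positivity
    have hfactor : |q - m| ≤ m + 1 := abs_le.2 ⟨by linarith, by linarith⟩
    refine le_of_mul_le_mul_left ?_ hm
    calc (m + 1) * |Ring.choose q (m + 1)| = |q - m| * |Ring.choose q m| := by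
          rw [← abs_of_pos hm, ← abs_mul, succ_mul_choose_succ, abs_mul]
      _ ≤ (m + 1) * 1 := by gcongr

lemma abs_choose_le_two_rpow {q : ℝ} (hq : 0 ≤ q) (m : ℕ) : |Ring.choose q m| ≤ 2 ^ q := by
  induction hn : ⌊q⌋₊ generalizing q m with
  | zero =>
    exact (abs_choose_le_one hq (Nat.floor_eq_zero.1 hn).le m).trans
      (Real.one_le_rpow one_le_two hq)
  | succ n ih =>
    have hq₁ : 0 ≤ q - 1 := sub_nonneg.2 (Nat.one_le_floor_iff q |>.1 (by omega))
    have hfloor : ⌊q - 1⌋₊ = n := by rw [Nat.floor_sub_one, hn, Nat.add_sub_cancel]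
    cases m with
    | zero => simpa using Real.one_le_rpow one_le_two hq
    | succ m =>
      calc |Ring.choose q (m + 1)| = |Ring.choose (q - 1) m + Ring.choose (q - 1) (m + 1)| := by
            rw [← Ring.choose_succ_succ, sub_add_cancel]
        _ ≤ 2 ^ (q - 1) + 2 ^ (q - 1) :=
            (abs_add_le _ _).trans (add_le_add (ih hq₁ m hfloor) (ih hq₁ (m + 1) hfloor))
        _ = 2 ^ q := by rw [← two_mul, Real.rpow_sub_one two_ne_zero]; ring

lemma one_sub_div_le_div_add_one_rpow {p x : ℝ} (hp : 1 ≤ p) (hx : 0 < x) :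
    1 - p / x ≤ (x / (x + 1)) ^ p := by
  have hbernoulli := one_add_mul_self_le_rpow_one_add (s := -(1 / (x + 1)))
    (neg_le_neg (by rw [div_le_one (by positivity)]; linarith)) hp
  have hbase : 1 + -(1 / (x + 1)) = x / (x + 1) := by field_simp; ring
  have hle : p / (x + 1) ≤ p / x := by gcongr; linarith
  rw [hbase] at hbernoulli
  refine le_trans ?_ hbernoulli
  calc 1 - p / x ≤ 1 - p / (x + 1) := by linarith
    _ = 1 + p * -(1 / (x + 1)) := by ring

lemma abs_choose_sub_one_succ_mul_rpow_le {p : ℝ} {m : ℕ} (hp : 1 ≤ p) (hm : p ≤ m + 1) :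
    |Ring.choose (p - 1) (m + 1)| * (m + 2) ^ p ≤ |Ring.choose (p - 1) m| * (m + 1) ^ p := by
  have hm₁ : (0 : ℝ) < m + 1 := by positivity
  have hratio : |Ring.choose (p - 1) (m + 1)| =
      |Ring.choose (p - 1) m| * (1 - p / (m + 1)) := by
    have h := congrArg abs (succ_mul_choose_succ (p - 1) m)
    rw [abs_mul, abs_mul, abs_of_pos hm₁, abs_of_nonpos (by linarith : p - 1 - m ≤ 0)] at h
    field_simp
    linarith
  calc |Ring.choose (p - 1) (m + 1)| * (m + 2) ^ p
      ≤ |Ring.choose (p - 1) m| * ((m + 1) / (m + 1 + 1)) ^ p * (m + 2) ^ p := by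
        rw [hratio]
        gcongr
        exact one_sub_div_le_div_add_one_rpow hp hm₁
    _ = |Ring.choose (p - 1) m| * (m + 1) ^ p := by
        rw [mul_assoc, ← Real.mul_rpow (by positivity) (by positivity)]
        congr 2
        field_simp
        ring

lemma abs_choose_sub_one_mul_rpow_le_of_le {p : ℝ} {n m : ℕ} (hp : 1 ≤ p) (hn : p ≤ n + 1)
    (hnm : n ≤ m) :
    |Ring.choose (p - 1) m| * (m + 1) ^ p ≤ |Ring.choose (p - 1) n| * (n + 1) ^ p := by
  induction m, hnm using Nat.le_induction with
  | base => rfl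
  | succ m hnm ih =>
    have hm : p ≤ m + 1 := hn.trans (by gcongr)
    refine le_trans (le_of_eq ?_) ((abs_choose_sub_one_succ_mul_rpow_le hp hm).trans ih)
    push_cast
    ring_nf

lemma abs_choose_sub_one_le {p : ℝ} {m : ℕ} (hp : 1 ≤ p) (hm : p ≤ m + 1) :
    |Ring.choose (p - 1) m| ≤ (4 * p / (m + 1)) ^ p / 2 := by
  obtain ⟨n, hn⟩ : ∃ n, ⌈p⌉₊ = n + 1 :=
    Nat.exists_eq_succ_of_ne_zero (Nat.ceil_pos.2 (by linarith)).ne'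
  have hnm : n ≤ m := by
    have : ⌈p⌉₊ ≤ m + 1 := Nat.ceil_le.2 (by exact_mod_cast hm)
    omega
  have hpn : p ≤ n + 1 := by exact_mod_cast hn ▸ Nat.le_ceil p
  have hnp : (n + 1 : ℝ) ≤ 2 * p := by
    have : (n + 1 : ℝ) < p + 1 := by exact_mod_cast hn ▸ Nat.ceil_lt_add_one (by linarith : 0 ≤ p)
    linarith
  rw [Real.div_rpow (by positivity) (by positivity), div_right_comm, le_div_iff₀ (by positivity)]
  calc |Ring.choose (p - 1) m| * (m + 1) ^ p
      ≤ |Ring.choose (p - 1) n| * (n + 1) ^ p :=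
        abs_choose_sub_one_mul_rpow_le_of_le hp hpn hnm
    _ ≤ 2 ^ (p - 1) * (2 * p) ^ p := by
        gcongr
        exact abs_choose_le_two_rpow (sub_nonneg.2 hp) n
    _ = (4 * p) ^ p / 2 := by
        rw [Real.rpow_sub_one two_ne_zero, div_mul_eq_mul_div,
          ← Real.mul_rpow two_pos.le (by positivity)]
        ring_nf

end Choose

/-! ### The truncated binomial series -/

section BinomialSum

/-- The truncation after `n` terms of the binomial series of `(1 - t) ^ p`. -/
def binomialSum (p : ℝ) (n : ℕ) (t : ℝ) : ℝ := ∑ k ∈ range n, Ring.choose p k * (-t) ^ k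

lemma binomialSum_succ_zero (p : ℝ) (n : ℕ) : binomialSum p (n + 1) 0 = 1 := by
  simp [binomialSum, Finset.sum_range_succ']

lemma binomialSum_succ (p : ℝ) (n : ℕ) (t : ℝ) :
    binomialSum p (n + 1) t =
      (1 - t) * binomialSum (p - 1) n t + Ring.choose (p - 1) n * (-t) ^ n := by
  induction n with
  | zero => simp [binomialSum]
  | succ n ih =>
    have hpascal := Ring.choose_succ_succ (p - 1) n
    rw [sub_add_cancel] at hpascal
    rw [binomialSum, Finset.sum_range_succ, ← binomialSum, ih, hpascal]
    simp only [binomialSum, Finset.sum_range_succ]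
    ring

lemma hasDerivAt_binomialSum_succ (p : ℝ) (n : ℕ) (t : ℝ) :
    HasDerivAt (binomialSum p (n + 1)) (-p * binomialSum (p - 1) n t) t := by
  have hterm (k : ℕ) : HasDerivAt (fun t : ℝ ↦ Ring.choose p (k + 1) * (-t) ^ (k + 1))
      (-p * (Ring.choose (p - 1) k * (-t) ^ k)) t := by
    have habsorb := succ_mul_choose_add_one_succ (p - 1) k
    rw [sub_add_cancel] at habsorb
    refine (((hasDerivAt_neg t).fun_pow (k + 1)).const_mul (Ring.choose p (k + 1))).congr_deriv ?_
    push_cast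
    linear_combination -(-t) ^ k * habsorb
  have hsum := (HasDerivAt.fun_sum fun k (_ : k ∈ range n) ↦ hterm k).add_const 1
  rw [← Finset.mul_sum] at hsum
  refine hsum.congr_of_eventuallyEq (.of_forall fun x ↦ ?_)
  simp [binomialSum, Finset.sum_range_succ']

lemma hasDerivAt_one_sub_rpow_neg (p : ℝ) {t : ℝ} (ht : t < 1) :
    HasDerivAt (fun t : ℝ ↦ (1 - t) ^ (-p)) (p * (1 - t) ^ (-p - 1)) t := by
  simpa using ((hasDerivAt_id t).const_sub 1).rpow_const (p := -p) (.inl (sub_pos.2 ht).ne')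

lemma hasDerivAt_binomialSum_mul_rpow_neg (p : ℝ) (n : ℕ) {t : ℝ} (ht : t < 1) :
    HasDerivAt (fun t ↦ binomialSum p (n + 1) t * (1 - t) ^ (-p))
      (Ring.choose (p - 1) n * (-t) ^ n * (p * (1 - t) ^ (-p - 1))) t := by
  refine ((hasDerivAt_binomialSum_succ p n t).mul
    (hasDerivAt_one_sub_rpow_neg p ht)).congr_deriv ?_
  have hsplit : (1 - t) ^ (-p) = (1 - t) * (1 - t) ^ (-p - 1) := by
    rw [Real.rpow_sub_one (sub_pos.2 ht).ne']
    field_simp [(sub_pos.2 ht).ne']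
  rw [hsplit, binomialSum_succ]
  ring

lemma abs_binomialSum_sub_rpow_le_abs_choose {p t : ℝ} (hp : 0 < p) (n : ℕ) (ht₀ : 0 ≤ t)
    (ht₁ : t ≤ 1) :
    |binomialSum p (n + 1) t - (1 - t) ^ p| ≤ |Ring.choose (p - 1) n| := by
  rcases ht₁.eq_or_lt with rfl | ht₁
  · simp [binomialSum_succ, Real.zero_rpow hp.ne']
  set κ := |Ring.choose (p - 1) n|
  have hnorm : ‖binomialSum p (n + 1) t * (1 - t) ^ (-p) - 1‖ ≤ κ * ((1 - t) ^ (-p) - 1) := by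
    have hlt {x : ℝ} (hx : x ∈ Set.Icc 0 t) : x < 1 := hx.2.trans_lt ht₁
    have hf (x) (hx : x ∈ Set.Icc 0 t) :=
      (hasDerivAt_binomialSum_mul_rpow_neg p n (hlt hx)).sub_const 1
    have hB (x) (hx : x ∈ Set.Icc 0 t) :=
      ((hasDerivAt_one_sub_rpow_neg p (hlt hx)).sub_const 1).const_mul κ
    refine image_norm_le_of_norm_deriv_right_le_deriv_boundary'
      (fun x hx ↦ (hf x hx).continuousAt.continuousWithinAt)
      (fun x hx ↦ (hf x (Set.Ico_subset_Icc_self hx)).hasDerivWithinAt)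
      (by simp [binomialSum_succ_zero])
      (fun x hx ↦ (hB x hx).continuousAt.continuousWithinAt)
      (fun x hx ↦ (hB x (Set.Ico_subset_Icc_self hx)).hasDerivWithinAt)
      (fun x hx ↦ ?_) (Set.right_mem_Icc.2 ht₀)
    have hx₁ : x < 1 := hlt (Set.Ico_subset_Icc_self hx)
    have hw : 0 ≤ p * (1 - x) ^ (-p - 1) :=
      mul_nonneg hp.le (Real.rpow_nonneg (sub_nonneg.2 hx₁.le) _)
    rw [Real.norm_eq_abs, abs_mul, abs_mul, abs_pow, abs_neg, abs_of_nonneg hx.1, abs_of_nonneg hw]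
    gcongr
    exact mul_le_of_le_one_right (abs_nonneg _) (pow_le_one₀ hx.1 hx₁.le)
  have hpow : 0 < (1 - t) ^ p := Real.rpow_pos_of_pos (sub_pos.2 ht₁) p
  rw [Real.rpow_neg (sub_nonneg.2 ht₁.le), Real.norm_eq_abs] at hnorm
  calc |binomialSum p (n + 1) t - (1 - t) ^ p|
      = |binomialSum p (n + 1) t * ((1 - t) ^ p)⁻¹ - 1| * (1 - t) ^ p := by
        rw [← abs_of_pos hpow, ← abs_mul, abs_of_pos hpow]
        field_simp
    _ ≤ κ * (((1 - t) ^ p)⁻¹ - 1) * (1 - t) ^ p := by gcongr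
    _ = κ - κ * (1 - t) ^ p := by field_simp
    _ ≤ κ := sub_le_self _ (by positivity)

lemma abs_binomialSum_sub_rpow_le {p t : ℝ} {N : ℕ} (hp : 1 ≤ p) (hN : p ≤ N) (ht₀ : 0 ≤ t)
    (ht₁ : t ≤ 1) : |binomialSum p N t - (1 - t) ^ p| ≤ (4 * p / N) ^ p / 2 := by
  have hN₀ : 0 < N := Nat.cast_pos.1 (by linarith : (0 : ℝ) < N)
  obtain ⟨n, rfl⟩ := Nat.exists_eq_succ_of_ne_zero hN₀.ne'
  push_cast at hN ⊢
  exact (abs_binomialSum_sub_rpow_le_abs_choose (by linarith) n ht₀ ht₁).trans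
    (abs_choose_sub_one_le hp hN)

end BinomialSum

/-! ### Approximate multiplication -/

section Multiplication

/-- The tent map on `[0, 1]`, as a combination of two ReLUs. -/
def tent (x : ℝ) : ℝ := 2 * x⁺ - 4 * (x - 1 / 2)⁺

lemma tent_of_le_half {x : ℝ} (hx₀ : 0 ≤ x) (hx : x ≤ 1 / 2) : tent x = 2 * x := by
  rw [tent, posPart_of_nonneg hx₀, posPart_of_nonpos (sub_nonpos.2 hx)]
  ring

lemma tent_of_half_le {x : ℝ} (hx : 1 / 2 ≤ x) : tent x = 2 - 2 * x := by
  rw [tent, posPart_of_nonneg (by linarith), posPart_of_nonneg (sub_nonneg.2 hx)]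
  ring

lemma mapsTo_tent : Set.MapsTo tent (Set.Icc 0 1) (Set.Icc 0 1) := by
  rintro x ⟨hx₀, hx₁⟩
  rcases le_total x (1 / 2) with hx | hx
  · rw [tent_of_le_half hx₀ hx]
    constructor <;> linarith
  · rw [tent_of_half_le hx]
    constructor <;> linarith

lemma four_mul_self_sub_sq {x : ℝ} (hx₀ : 0 ≤ x) :
    4 * (x - x ^ 2) = 2 * tent x - tent x ^ 2 := by
  rcases le_total x (1 / 2) with hx | hx
  · rw [tent_of_le_half hx₀ hx]
    ring
  · rw [tent_of_half_le hx]
    ring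

lemma iterate_tent_mem_Icc {x : ℝ} (hx : x ∈ Set.Icc 0 1) (K : ℕ) :
    tent^[K] x ∈ Set.Icc 0 1 :=
  mapsTo_tent.iterate K hx

/-- Yarotsky's approximation of `x ^ 2` on `[0, 1]`: the piecewise linear interpolation at the
multiples of `2⁻ᴷ`. -/
def sqApprox (K : ℕ) (x : ℝ) : ℝ := x - ∑ k ∈ range K, tent^[k + 1] x / 4 ^ (k + 1)

lemma sqApprox_succ (K : ℕ) (x : ℝ) :
    sqApprox (K + 1) x = sqApprox K x - tent^[K + 1] x / 4 ^ (K + 1) := by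
  rw [sqApprox, Finset.sum_range_succ, ← sub_sub, ← sqApprox]

lemma sqApprox_eq {x : ℝ} (hx : x ∈ Set.Icc 0 1) (K : ℕ) :
    sqApprox K x = x ^ 2 + (tent^[K] x - tent^[K] x ^ 2) / 4 ^ K := by
  induction K with
  | zero => simp [sqApprox]
  | succ K ih =>
    have htent := four_mul_self_sub_sq (iterate_tent_mem_Icc hx K).1
    rw [sqApprox_succ, ih, Function.iterate_succ_apply', pow_succ]
    field_simp
    linear_combination 4 ^ K * htent

lemma sqApprox_sub_sq_mem_Icc {x : ℝ} (hx : x ∈ Set.Icc 0 1) (K : ℕ) :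
    sqApprox K x - x ^ 2 ∈ Set.Icc 0 (1 / 4 ^ (K + 1)) := by
  obtain ⟨hy₀, hy₁⟩ := iterate_tent_mem_Icc hx K
  rw [sqApprox_eq hx, add_sub_cancel_left, pow_succ', ← div_div]
  refine ⟨div_nonneg (by nlinarith) (by positivity), ?_⟩
  gcongr
  nlinarith [sq_nonneg (tent^[K] x - 1 / 2)]

/-- The approximation of `x * y = ((x + y) / 2) ^ 2 - (|x - y| / 2) ^ 2` by `sqApprox`. -/
def mulApprox (K : ℕ) (x y : ℝ) : ℝ := sqApprox K ((x + y) / 2) - sqApprox K (|x - y| / 2)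

lemma abs_mulApprox_sub_mul_le {x y : ℝ} (hx : x ∈ Set.Icc 0 1) (hy : y ∈ Set.Icc 0 1) (K : ℕ) :
    |mulApprox K x y - x * y| ≤ 1 / 4 ^ (K + 1) := by
  have hadd : (x + y) / 2 ∈ Set.Icc 0 1 := ⟨by linarith [hx.1, hy.1], by linarith [hx.2, hy.2]⟩
  have hsub : |x - y| / 2 ∈ Set.Icc 0 1 := by
    have : |x - y| ≤ 1 := abs_le.2 ⟨by linarith [hx.1, hy.2], by linarith [hx.2, hy.1]⟩
    exact ⟨by positivity, by linarith⟩
  have hpolar : mulApprox K x y - x * y =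
      (sqApprox K ((x + y) / 2) - ((x + y) / 2) ^ 2) -
        (sqApprox K (|x - y| / 2) - (|x - y| / 2) ^ 2) := by
    rw [mulApprox, div_pow |x - y|, sq_abs]
    ring
  obtain ⟨ha₀, ha₁⟩ := sqApprox_sub_sq_mem_Icc hadd K
  obtain ⟨hb₀, hb₁⟩ := sqApprox_sub_sq_mem_Icc hsub K
  rw [hpolar]
  exact abs_sub_le_of_nonneg_of_le ha₀ ha₁ hb₀ hb₁

/-- The approximation of `t ^ n` by iterated approximate multiplication. Projecting onto `[0, 1]`
keeps the factors in the range where `mulApprox` is accurate. -/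
def powApprox (K : ℕ) (t : ℝ) : ℕ → unitInterval
  | 0 => 1
  | n + 1 => Set.projIcc 0 1 zero_le_one (mulApprox K t (powApprox K t n))

lemma abs_powApprox_sub_pow_le {t : ℝ} (ht : t ∈ Set.Icc 0 1) (K n : ℕ) :
    |powApprox K t n - t ^ n| ≤ n / 4 ^ (K + 1) := by
  induction n with
  | zero => simp [powApprox]
  | succ n ih =>
    set s := powApprox K t n
    have hts : t * s ∈ Set.Icc (0 : ℝ) 1 := unitInterval.mul_mem ht s.2
    have hstep : |powApprox K t (n + 1) - t * s| ≤ 1 / 4 ^ (K + 1) := by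
      have hproj := Set.abs_projIcc_sub_projIcc (zero_le_one (α := ℝ)) (c := mulApprox K t s)
        (d := t * s)
      rw [Set.projIcc_of_mem zero_le_one hts] at hproj
      exact hproj.trans (abs_mulApprox_sub_mul_le ht s.2 K)
    have hprev : |t * s - t ^ (n + 1)| ≤ n / 4 ^ (K + 1) := by
      rw [pow_succ', ← mul_sub, abs_mul, abs_of_nonneg ht.1]
      exact (mul_le_of_le_one_left (abs_nonneg _) ht.2).trans ih
    calc |powApprox K t (n + 1) - t ^ (n + 1)|
        ≤ 1 / 4 ^ (K + 1) + n / 4 ^ (K + 1) :=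
          (abs_sub_le _ (t * s) _).trans (add_le_add hstep hprev)
      _ = (n + 1 : ℕ) / 4 ^ (K + 1) := by push_cast; ring

/-- The polynomial `∑ k < n, c k * t ^ k` with its powers replaced by `powApprox`. -/
def polyApprox (c : ℕ → ℝ) (K : ℕ) (t : ℝ) (n : ℕ) : ℝ :=
  ∑ k ∈ range n, c k * powApprox K t k

lemma abs_polyApprox_sub_le {c : ℕ → ℝ} {B t : ℝ} (hc : ∀ k, |c k| ≤ B)
    (ht : t ∈ Set.Icc 0 1) (K n : ℕ) :
    |polyApprox c K t n - ∑ k ∈ range n, c k * t ^ k| ≤ n ^ 2 * B / 4 ^ (K + 1) := by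
  have hterm : ∀ k ∈ range n, |c k * powApprox K t k - c k * t ^ k| ≤ B * (n / 4 ^ (K + 1)) := by
    intro k hk
    have hkn : (k : ℝ) ≤ n := by exact_mod_cast (Finset.mem_range.1 hk).le
    rw [← mul_sub, abs_mul]
    exact mul_le_mul (hc k) ((abs_powApprox_sub_pow_le ht K k).trans (by gcongr)) (abs_nonneg _)
      ((abs_nonneg _).trans (hc k))
  calc |polyApprox c K t n - ∑ k ∈ range n, c k * t ^ k|
      ≤ ∑ k ∈ range n, |c k * powApprox K t k - c k * t ^ k| := by
        rw [polyApprox, ← Finset.sum_sub_distrib]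
        exact Finset.abs_sum_le_sum_abs _ _
    _ ≤ n * (B * (n / 4 ^ (K + 1))) := by
        simpa using Finset.sum_le_card_nsmul _ _ _ hterm
    _ = n ^ 2 * B / 4 ^ (K + 1) := by ring

end Multiplication

/-! ### Composition of networks -/

section Append

namespace MLP

variable {m h n : ℕ}

/-- The composition of two networks, with a ReLU applied to the output of the first. -/
def append : {m h n : ℕ} → MLP m h → MLP h n → MLP m n
  | _, _, _, last W b, g => cons W b g
  | _, _, _, cons W b f, g => cons W b (append f g)

lemma eval_append (f : MLP m h) (g : MLP h n) (x : Fin m → ℝ) :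
    (f.append g).eval x = g.eval (f.eval x)⁺ := by
  induction f with
  | last W b => rfl
  | cons W b _ ih => exact ih g _

lemma depth_append (f : MLP m h) (g : MLP h n) : (f.append g).depth = f.depth + g.depth := by
  induction f with
  | last W b => simp only [append, depth, add_comm]
  | cons W b f ih => simp only [append, depth, ih, add_right_comm]

lemma width_append (f : MLP m h) (g : MLP h n) :
    (f.append g).width = max (max f.width h) g.width := by
  induction f with
  | last W b => simp [append, width]
  | cons W b f ih => simp only [append, width, ih, max_assoc]

end MLP

end Append

/-! ### The polynomial network -/

section PolyNet

open MLP

local notation "𝐞" i:max => Pi.single i (1 : ℝ)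

/-- The hidden state between two multiplications: the argument `t`, its current approximate power
`s`, and the partial sum `A`, whose sign is arbitrary and which is stored as a pair of nonnegative
numbers. -/
def powState (t s A : ℝ) : Fin 4 → ℝ := ![t, s, A⁺, A⁻]

/-- The hidden state from which `t * s` is computed: `powState t s A` together with the positive
and negative parts of `t - s`. -/
def diffState (t s A : ℝ) : Fin 6 → ℝ := ![t, s, A⁺, A⁻, (t - s)⁺, (t - s)⁻]

/-- The hidden state of the squaring subnetwork: the argument `t`, the partial sum `A`, the
approximate product `P`, and the two ReLUs needed to evaluate `tent` at `x` and at `y`. -/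
def sqState (t A P x y : ℝ) : Fin 9 → ℝ :=
  ![t, A⁺, A⁻, P⁺, P⁻, x⁺, (x - 1 / 2)⁺, y⁺, (y - 1 / 2)⁺]

/-- Adds `c * s` to the partial sum `A` and computes the positive and negative parts of
`d = t - s`. -/
def accumulateLayer (c : ℝ) : MLP 4 6 :=
  let A := 𝐞 2 - 𝐞 3 + c • 𝐞 1
  let d := 𝐞 0 - 𝐞 1
  last (.of ![𝐞 0, 𝐞 1, A, -A, d, -d]) 0

/-- Computes `x = (t + s) / 2` and `y = |t - s| / 2`, and starts the approximate product
`t * s = x ^ 2 - y ^ 2` at `P = x - y`. -/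
def polarizeLayer : MLP 6 9 :=
  let A := 𝐞 2 - 𝐞 3
  let x := (1 / 2 : ℝ) • (𝐞 0 + 𝐞 1)
  let y := (1 / 2 : ℝ) • (𝐞 4 + 𝐞 5)
  last (.of ![𝐞 0, A, -A, x - y, -(x - y), x, x, y, y]) ![0, 0, 0, 0, 0, 0, -(1 / 2), 0, -(1 / 2)]

/-- Replaces `x` and `y` by `tent x` and `tent y`, and subtracts `c * (tent x - tent y)` from the
approximate product `P`. -/
def tentLayer (c : ℝ) : MLP 9 9 :=
  let A := 𝐞 1 - 𝐞 2
  let x := (2 : ℝ) • 𝐞 5 - (4 : ℝ) • 𝐞 6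
  let y := (2 : ℝ) • 𝐞 7 - (4 : ℝ) • 𝐞 8
  let P := 𝐞 3 - 𝐞 4 - c • (x - y)
  last (.of ![𝐞 0, A, -A, P, -P, x, x, y, y]) ![0, 0, 0, 0, 0, 0, -(1 / 2), 0, -(1 / 2)]

/-- Replaces the approximate product `P` by `(1 - P)⁺`; applying `x ↦ (1 - x)⁺` twice projects
onto `[0, 1]`. -/
def reflectProductLayer : MLP 9 4 :=
  let A := 𝐞 1 - 𝐞 2
  last (.of ![𝐞 0, -(𝐞 3 - 𝐞 4), A, -A]) ![0, 1, 0, 0]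

/-- Replaces the approximate power `s` by `(1 - s)⁺`. -/
def reflectLayer : MLP 4 4 :=
  let A := 𝐞 2 - 𝐞 3
  last (.of ![𝐞 0, -𝐞 1, A, -A]) ![0, 1, 0, 0]

/-- Prepares the state for the argument `t⁺`, the zeroth power `1` and the empty sum. -/
def inputLayer : MLP 1 4 :=
  last (.of ![𝐞 0, 0, 0, 0]) ![0, 1, 0, 0]

/-- Maps `t` to `1 - t`. -/
def complementLayer : MLP 1 1 := last (.of ![-𝐞 0]) 1

/-- Reads off the partial sum. -/
def outputLayer : MLP 4 1 := last (.of ![𝐞 2 - 𝐞 3]) 0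

lemma eval_accumulateLayer (c : ℝ) (v : Fin 4 → ℝ) :
    (accumulateLayer c).eval v =
      let A := v 2 - v 3 + c * v 1
      let d := v 0 - v 1
      ![v 0, v 1, A, -A, d, -d] := by
  ext i
  fin_cases i <;>
    simp [-neg_add_rev, -neg_sub, accumulateLayer, eval, add_dotProduct, sub_dotProduct]

lemma eval_polarizeLayer (v : Fin 6 → ℝ) :
    polarizeLayer.eval v =
      let A := v 2 - v 3
      let x := (v 0 + v 1) / 2
      let y := (v 4 + v 5) / 2
      ![v 0, A, -A, x - y, -(x - y), x, x - 1 / 2, y, y - 1 / 2] := by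
  ext i
  fin_cases i <;>
    simp [-neg_sub, polarizeLayer, eval, add_dotProduct, sub_dotProduct, div_eq_inv_mul, mul_add,
      ← sub_eq_add_neg]

lemma eval_tentLayer (c : ℝ) (v : Fin 9 → ℝ) :
    (tentLayer c).eval v =
      let A := v 1 - v 2
      let x := 2 * v 5 - 4 * v 6
      let y := 2 * v 7 - 4 * v 8
      let P := v 3 - v 4 - c * (x - y)
      ![v 0, A, -A, P, -P, x, x - 1 / 2, y, y - 1 / 2] := by
  ext i
  fin_cases i <;> simp [-neg_sub, tentLayer, eval, sub_dotProduct, ← sub_eq_add_neg]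

lemma eval_reflectProductLayer (v : Fin 9 → ℝ) :
    reflectProductLayer.eval v =
      let A := v 1 - v 2
      ![v 0, 1 - (v 3 - v 4), A, -A] := by
  ext i
  fin_cases i <;> simp [-neg_sub, reflectProductLayer, eval, sub_dotProduct, neg_add_eq_sub]

lemma eval_reflectLayer (v : Fin 4 → ℝ) :
    reflectLayer.eval v =
      let A := v 2 - v 3
      ![v 0, 1 - v 1, A, -A] := by
  ext i
  fin_cases i <;> simp [reflectLayer, eval, sub_dotProduct, neg_add_eq_sub]

lemma eval_complementLayer (v : Fin 1 → ℝ) : complementLayer.eval v 0 = 1 - v 0 := by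
  simp [complementLayer, eval, neg_add_eq_sub]

lemma eval_outputLayer (t s A : ℝ) : outputLayer.eval (powState t s A) 0 = A := by
  have heval (v : Fin 4 → ℝ) : outputLayer.eval v 0 = v 2 - v 3 := by
    simp [outputLayer, eval, sub_dotProduct]
  simp [heval, powState]

lemma posPart_eval_inputLayer (x : Fin 1 → ℝ) :
    (inputLayer.eval x)⁺ = powState (x 0)⁺ 1 0 := by
  ext i
  fin_cases i <;> simp [inputLayer, powState, eval]

lemma posPart_eval_accumulateLayer {t s : ℝ} (ht : 0 ≤ t) (hs : 0 ≤ s) (c A : ℝ) :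
    ((accumulateLayer c).eval (powState t s A))⁺ = diffState t s (A + c * s) := by
  rw [eval_accumulateLayer]
  ext i
  fin_cases i <;> simp [-neg_sub, -neg_add_rev, powState, diffState, ht, hs]

lemma posPart_eval_polarizeLayer {t : ℝ} (ht : 0 ≤ t) (s A : ℝ) :
    (polarizeLayer.eval (diffState t s A))⁺ =
      sqState t A ((t + s) / 2 - |t - s| / 2) ((t + s) / 2) (|t - s| / 2) := by
  rw [eval_polarizeLayer]
  ext i
  fin_cases i <;> simp [-neg_sub, diffState, sqState, posPart_add_negPart, ht]

lemma posPart_eval_tentLayer {t : ℝ} (ht : 0 ≤ t) (c A P x y : ℝ) :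
    ((tentLayer c).eval (sqState t A P x y))⁺ =
      sqState t A (P - c * (tent x - tent y)) (tent x) (tent y) := by
  rw [eval_tentLayer]
  ext i
  fin_cases i <;> simp [-neg_sub, sqState, tent, ht]

lemma posPart_eval_reflectProductLayer {t : ℝ} (ht : 0 ≤ t) (A P x y : ℝ) :
    (reflectProductLayer.eval (sqState t A P x y))⁺ = powState t (1 - P)⁺ A := by
  rw [eval_reflectProductLayer]
  ext i
  fin_cases i <;> simp [powState, sqState, ht]

lemma posPart_eval_reflectLayer {t : ℝ} (ht : 0 ≤ t) (s A : ℝ) :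
    (reflectLayer.eval (powState t s A))⁺ = powState t (1 - s)⁺ A := by
  rw [eval_reflectLayer]
  ext i
  fin_cases i <;> simp [powState, ht]

/-- Maps `diffState t s A` to the state `sqState` holding `mulApprox K t s`. -/
def squareNet : ℕ → MLP 6 9
  | 0 => polarizeLayer
  | K + 1 => (squareNet K).append (tentLayer (1 / 4 ^ (K + 1)))

lemma posPart_eval_squareNet {t : ℝ} (ht : 0 ≤ t) (s A : ℝ) (K : ℕ) :
    ((squareNet K).eval (diffState t s A))⁺ =
      sqState t A (mulApprox K t s) (tent^[K] ((t + s) / 2)) (tent^[K] (|t - s| / 2)) := by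
  induction K with
  | zero => simpa [squareNet, mulApprox, sqApprox] using posPart_eval_polarizeLayer ht s A
  | succ K ih =>
    rw [squareNet, eval_append, ih, posPart_eval_tentLayer ht]
    simp only [mulApprox, sqApprox_succ, Function.iterate_succ_apply']
    congr 1
    ring

lemma depth_squareNet (K : ℕ) : (squareNet K).depth = K + 1 := by
  induction K with
  | zero => rfl
  | succ K ih => rw [squareNet, depth_append, ih, tentLayer, depth]

lemma width_squareNet_le (K : ℕ) : (squareNet K).width ≤ 9 := by
  induction K with
  | zero => simp [squareNet, polarizeLayer, width]
  | succ K ih => simpa [squareNet, tentLayer, width_append, width] using ih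

lemma posPart_one_sub_posPart_one_sub (x : ℝ) :
    (1 - (1 - x)⁺)⁺ = Set.projIcc 0 1 zero_le_one x := by
  rw [Set.coe_projIcc, posPart_def, posPart_def, ← min_sub_sub_left, sub_sub_cancel, sub_zero,
    max_comm, min_comm]

/-- Maps `powState t s A` to `powState t s' (A + c * s)`, where `s'` is the projection of
`mulApprox K t s` onto `[0, 1]`. -/
def powerBlock (c : ℝ) (K : ℕ) : MLP 4 4 :=
  (((accumulateLayer c).append (squareNet K)).append reflectProductLayer).append reflectLayer

lemma posPart_eval_powerBlock {t s : ℝ} (ht : 0 ≤ t) (hs : 0 ≤ s) (c A : ℝ) (K : ℕ) :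
    ((powerBlock c K).eval (powState t s A))⁺ =
      powState t (Set.projIcc 0 1 zero_le_one (mulApprox K t s)) (A + c * s) := by
  rw [powerBlock, eval_append, eval_append, eval_append, posPart_eval_accumulateLayer ht hs,
    posPart_eval_squareNet ht, posPart_eval_reflectProductLayer ht, posPart_eval_reflectLayer ht,
    posPart_one_sub_posPart_one_sub]

lemma depth_powerBlock (c : ℝ) (K : ℕ) : (powerBlock c K).depth = K + 4 := by
  simp only [powerBlock, depth_append, depth_squareNet, accumulateLayer, reflectProductLayer,
    reflectLayer, depth]
  ring

lemma width_powerBlock (c : ℝ) (K : ℕ) : (powerBlock c K).width = 9 := by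
  have hwidth := width_squareNet_le K
  simp only [powerBlock, width_append, accumulateLayer, reflectProductLayer, reflectLayer, width]
  omega

/-- Maps `t` to the state holding its `n`-th approximate power and `polyApprox c K t n`. -/
def polyNet (c : ℕ → ℝ) (K : ℕ) : ℕ → MLP 1 4
  | 0 => inputLayer
  | n + 1 => (polyNet c K n).append (powerBlock (c n) K)

lemma posPart_eval_polyNet (c : ℕ → ℝ) (K n : ℕ) (x : Fin 1 → ℝ) :
    ((polyNet c K n).eval x)⁺ =
      powState (x 0)⁺ (powApprox K (x 0)⁺ n) (polyApprox c K (x 0)⁺ n) := by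
  induction n with
  | zero => simpa [polyNet, powApprox, polyApprox] using posPart_eval_inputLayer x
  | succ n ih =>
    rw [polyNet, eval_append, ih, posPart_eval_powerBlock (posPart_nonneg _) unitInterval.nonneg',
      powApprox, polyApprox, polyApprox, Finset.sum_range_succ]

lemma depth_polyNet (c : ℕ → ℝ) (K n : ℕ) : (polyNet c K n).depth = n * (K + 4) + 1 := by
  induction n with
  | zero => simp [polyNet, inputLayer, depth]
  | succ n ih => rw [polyNet, depth_append, ih, depth_powerBlock]; ring

lemma width_polyNet_succ (c : ℕ → ℝ) (K n : ℕ) : (polyNet c K (n + 1)).width = 9 := by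
  induction n with
  | zero => simp [polyNet, inputLayer, width, width_append, width_powerBlock]
  | succ n ih => rw [polyNet, width_append, ih, width_powerBlock]; rfl

/-- Approximates `α ^ p` by evaluating `binomialSum p N` at `1 - α`. -/
def rpowNet (p : ℝ) (K N : ℕ) : MLP 1 1 :=
  complementLayer.append
    ((polyNet (fun k ↦ (-1) ^ k * Ring.choose p k) K N).append outputLayer)

lemma eval_rpowNet (p : ℝ) (K N : ℕ) {α : ℝ} (hα : α ≤ 1) :
    (rpowNet p K N).eval (fun _ ↦ α) 0 =
      polyApprox (fun k ↦ (-1) ^ k * Ring.choose p k) K (1 - α) N := by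
  have hinput : (complementLayer.eval fun _ ↦ α)⁺ 0 = 1 - α := by
    rw [Pi.posPart_apply, eval_complementLayer, posPart_of_nonneg (sub_nonneg.2 hα)]
  rw [rpowNet, eval_append, eval_append, posPart_eval_polyNet, eval_outputLayer, hinput,
    posPart_of_nonneg (sub_nonneg.2 hα)]

lemma depth_rpowNet (p : ℝ) (K N : ℕ) : (rpowNet p K N).depth = N * (K + 4) + 3 := by
  simp only [rpowNet, depth_append, depth_polyNet, complementLayer, outputLayer, depth]
  ring

lemma width_rpowNet (p : ℝ) (K : ℕ) {N : ℕ} (hN : N ≠ 0) : (rpowNet p K N).width = 9 := by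
  obtain ⟨n, rfl⟩ := Nat.exists_eq_succ_of_ne_zero hN
  simp [rpowNet, complementLayer, outputLayer, width_append, width_polyNet_succ, width]

lemma abs_eval_rpowNet_sub_rpow_le {p α : ℝ} {N : ℕ} (hp : 1 ≤ p) (hN : p ≤ N) (hα₀ : 0 ≤ α)
    (hα₁ : α ≤ 1) (K : ℕ) :
    |(rpowNet p K N).eval (fun _ ↦ α) 0 - α ^ p| ≤
      N ^ 2 * 2 ^ p / 4 ^ (K + 1) + (4 * p / N) ^ p / 2 := by
  have ht : 1 - α ∈ Set.Icc 0 1 := ⟨sub_nonneg.2 hα₁, sub_le_self 1 hα₀⟩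
  have hcoeff (k : ℕ) : |(-1) ^ k * Ring.choose p k| ≤ 2 ^ p := by
    rw [abs_mul, abs_neg_one_pow, one_mul]
    exact abs_choose_le_two_rpow (by linarith) k
  have hsum : ∑ k ∈ range N, (-1) ^ k * Ring.choose p k * (1 - α) ^ k =
      binomialSum p N (1 - α) := by
    refine Finset.sum_congr rfl fun k _ ↦ ?_
    rw [neg_pow (1 - α)]
    ring
  have hpoly := abs_polyApprox_sub_le hcoeff ht K N
  have hseries := abs_binomialSum_sub_rpow_le hp hN ht.1 ht.2
  rw [hsum] at hpoly
  rw [sub_sub_cancel] at hseries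
  rw [eval_rpowNet p K N hα₁]
  exact (abs_sub_le _ _ _).trans (add_le_add hpoly hseries)

end PolyNet

/-! ### Choice of the parameters -/

section Parameters

lemma one_le_rpow_neg_one_div {p ε : ℝ} (hp : 0 ≤ p) (hε : 0 < ε) (hε₁ : ε ≤ 1) :
    1 ≤ ε ^ (-(1 : ℝ) / p) :=
  Real.one_le_rpow_of_pos_of_le_one_of_nonpos hε hε₁ (div_nonpos_of_nonpos_of_nonneg (by simp) hp)

lemma rpow_neg_one_div_le_inv {p ε : ℝ} (hp : 1 ≤ p) (hε : 0 < ε) (hε₁ : ε ≤ 1) :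
    ε ^ (-(1 : ℝ) / p) ≤ ε⁻¹ := by
  rw [← Real.rpow_neg_one]
  refine Real.rpow_le_rpow_of_exponent_ge hε hε₁ ?_
  rw [neg_div, neg_le_neg_iff]
  exact (div_le_one (by linarith)).2 hp

lemma div_rpow_le_of_mul_rpow_neg_one_div_le {p ε c x : ℝ} (hp : 0 < p) (hε : 0 < ε) (hc : 0 < c)
    (hx : c * ε ^ (-(1 : ℝ) / p) ≤ x) : (c / x) ^ p ≤ ε := by
  have hroot : ε ^ (-(1 : ℝ) / p) = (ε ^ p⁻¹)⁻¹ := by rw [neg_div, one_div, Real.rpow_neg hε.le]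
  have hroot₀ : 0 < ε ^ p⁻¹ := Real.rpow_pos_of_pos hε _
  rw [hroot] at hx
  have hx₀ : 0 < x := lt_of_lt_of_le (by positivity) hx
  calc (c / x) ^ p ≤ (ε ^ p⁻¹) ^ p := by
        gcongr
        rwa [div_le_iff₀ hx₀, ← div_le_iff₀' hroot₀, div_eq_mul_inv]
    _ = ε := Real.rpow_inv_rpow hε.le hp.ne'

lemma mul_two_rpow_pow_four_le {x p : ℝ} {K : ℕ} (hx : 0 < x)
    (hK : 2 * (Real.logb 2 x + p) + 1 ≤ K) : 16 * (x * 2 ^ p) ^ 4 ≤ 4 ^ (K + 1) := by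
  have hexp : (2 : ℝ) ^ (Real.logb 2 x + p) = x * 2 ^ p := by
    rw [Real.rpow_add two_pos, Real.rpow_logb two_pos (by norm_num) hx]
  calc 16 * (x * 2 ^ p) ^ 4 = (2 ^ (Real.logb 2 x + p + 1)) ^ 4 := by
        rw [Real.rpow_add_one two_ne_zero, hexp]
        ring
    _ = 2 ^ ((Real.logb 2 x + p + 1) * 4) := by
        rw [← Real.rpow_mul_natCast two_pos.le]
        norm_num
    _ ≤ 2 ^ ((2 * (K + 1) : ℕ) : ℝ) := by
        gcongr
        · exact one_le_two
        · push_cast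
          linarith
    _ = 4 ^ (K + 1) := by
        rw [Real.rpow_natCast, pow_mul]
        norm_num

lemma sq_mul_two_rpow_div_four_pow_lt {p ε : ℝ} {N K : ℕ} (hp : 1 ≤ p) (hε : 0 < ε)
    (hε₁ : ε ≤ 1) (hN : N ≤ 5 * (p * ε⁻¹)) (hK : 2 * (Real.logb 2 (p * ε⁻¹) + p) + 1 ≤ K) :
    N ^ 2 * 2 ^ p / 4 ^ (K + 1) < ε / 2 := by
  set R := p * ε⁻¹
  have hεR : 1 ≤ ε * R := by rwa [mul_comm, inv_mul_cancel_right₀ hε.ne']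
  have hR : 1 ≤ R := hεR.trans (mul_le_of_le_one_left (by positivity) hε₁)
  have htwo : 2 ≤ (2 : ℝ) ^ p := by
    simpa using Real.rpow_le_rpow_of_exponent_le one_le_two hp
  rw [div_lt_div_iff₀ (by positivity) two_pos]
  calc N ^ 2 * 2 ^ p * 2 ≤ (5 * R) ^ 2 * 2 ^ p * 2 := by gcongr
    _ < 16 * 1 * 1 * 2 ^ 3 * R ^ 2 * 2 ^ p := by
        have : 0 < R ^ 2 * 2 ^ p := by positivity
        linarith
    _ ≤ 16 * (ε * R) * R * (2 ^ p) ^ 3 * R ^ 2 * 2 ^ p := by gcongr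
    _ = ε * (16 * (R * 2 ^ p) ^ 4) := by ring
    _ ≤ ε * 4 ^ (K + 1) := by
        gcongr
        exact mul_two_rpow_pow_four_le (by positivity) hK

lemma depth_rpowNet_le {K N : ℕ} {x L : ℝ} (p : ℝ) (hx : 1 ≤ x) (hL : 1 ≤ L) (hN : N ≤ 5 * x)
    (hK : K ≤ 2 * L + 2) : (rpowNet p K N).depth ≤ 43 * x * L :=
  calc ((rpowNet p K N).depth : ℝ) = N * (K + 4) + 3 := by simp [depth_rpowNet]
    _ ≤ 5 * x * (8 * L) + 3 * (x * L) := by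
        gcongr
        · linarith
        · linarith [one_le_mul_of_one_le_of_one_le hx hL]
    _ = 43 * x * L := by ring

end Parameters

theorem power_approximation_network_real_general :
    ∃ C₀ : ℝ, 0 < C₀ ∧
      ∀ (p ε : ℝ), 1 ≤ p → 0 < ε → ε ≤ 1 →
        ∃ g : MLP 1 1, g.width = 9 ∧
          (g.depth : ℝ) ≤ C₀ * p * ε ^ (-(1 : ℝ) / p) * (Real.logb 2 (p * ε⁻¹) + p) ∧
          ∀ α : ℝ, 0 ≤ α → α ≤ 1 → |g.eval (fun _ => α) 0 - α ^ p| < ε := by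
  refine ⟨43, by norm_num, fun p ε hp hε hε₁ ↦ ?_⟩
  set E := ε ^ (-(1 : ℝ) / p)
  set L := Real.logb 2 (p * ε⁻¹) + p
  have hE : 1 ≤ E := one_le_rpow_neg_one_div (by linarith) hε hε₁
  have hpE : 1 ≤ p * E := one_le_mul_of_one_le_of_one_le hp hE
  have hL : 1 ≤ L := le_add_of_nonneg_of_le (Real.logb_nonneg one_lt_two
    (one_le_mul_of_one_le_of_one_le hp (one_le_inv_iff₀.2 ⟨hε, hε₁⟩))) hp
  set N := ⌈4 * p * E⌉₊
  set K := ⌈2 * L + 1⌉₊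
  have hN : 4 * p * E ≤ N := Nat.le_ceil _
  have hN' : N ≤ 5 * (p * E) := by
    linarith [Nat.ceil_lt_add_one (show 0 ≤ 4 * p * E by positivity)]
  have hK' : K ≤ 2 * L + 2 := by
    linarith [Nat.ceil_lt_add_one (show 0 ≤ 2 * L + 1 by positivity)]
  refine ⟨rpowNet p K N, width_rpowNet p K (Nat.ceil_pos.2 (by positivity)).ne', ?_, ?_⟩
  · rw [mul_assoc 43]
    exact depth_rpowNet_le p hpE hL hN' hK'
  · intro α hα₀ hα₁
    have hpN : p ≤ N := by nlinarith
    have hNε : N ≤ 5 * (p * ε⁻¹) := hN'.trans <| by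
      gcongr
      exact rpow_neg_one_div_le_inv hp hε hε₁
    have herror := abs_eval_rpowNet_sub_rpow_le hp hpN hα₀ hα₁ K
    have hmul := sq_mul_two_rpow_div_four_pow_lt hp hε hε₁ hNε (Nat.le_ceil _)
    have hseries : (4 * p / N) ^ p ≤ ε :=
      div_rpow_le_of_mul_rpow_neg_one_div_le (by positivity) hε (by positivity) hN
    linarith

/-- **Network approximation of the `p`-th power, non-integer real `p > 1`**. -/
theorem power_approximation_network_real :
    ∃ C₀ : ℝ, 0 < C₀ ∧
      ∀ (p ε : ℝ), 1 < p → (¬ ∃ n : ℕ, p = (n : ℝ)) → 0 < ε → ε < 1 →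
        ∃ g : MLP 1 1, g.width = 9 ∧
          (g.depth : ℝ) ≤ C₀ * p * ε ^ (-(1 : ℝ) / p) * (Real.logb 2 (p * ε⁻¹) + p) ∧
          ∀ α : ℝ, 0 ≤ α → α ≤ 1 → |g.eval (fun _ => α) 0 - α ^ p| < ε := by
  obtain ⟨C₀, hC₀, h⟩ := power_approximation_network_real_general
  exact ⟨C₀, hC₀, fun p ε hp _ hε hε₁ ↦ h p ε hp.le hε hε₁.le⟩

end
end
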